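/- arXiv:1312.5189 — 2 statements merged into one kernel-verified Lean document; each statement's English description precedes it below -/
import Mathlib

section
/- Let δ ∈ ℝ with 1 < δ < 2, let α₀, α₁ ≥ 0, and let b, c : [0,1] → ℝ be continuous. Let u : [0,1] → ℝ be continuously differentiable on [0,1] and three times continuously differentiable on (0,1], with |u''(x)| ≤ C₀ x^{δ−2} and |u'''(x)| ≤ C₀ x^{δ−3} for all 0 < x ≤ 1 and some constant C₀. For an integer N ≥ 2 set h = 1/N and x_j = jh, and define the truncation errors: τ₀ = α₀ u'(0) − (α₀/h)(u(x₁) − u(x₀)); τ_N = −α₁ u'(x_N) + (α₁/h)(u(x_N) − u(x_{N−1})); and for 1 ≤ j ≤ N−1, τ_j = [ −(1/(h^δ Γ(3−δ))) Σ_{k=0}^{j−1} d_{j−k} ( u(x_{k+2}) − 2u(x_{k+1}) + u(x_k) ) + b(x_j) D^ℵ u(x_j) + c(x_j) u(x_j) ] − [ −D*^δ u(x_j) + b(x_j) u'(x_j) + c(x_j) u(x_j) ], where d_r := (max(r,0))^{2−δ} − (max(r−1,0))^{2−δ} and D^ℵ u(x_j) := (u(x_{j+1}) − u(x_j))/h if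 b(x_j) < 0 and (u(x_j) − u(x_{j−1}))/h if b(x_j) ≥ 0. Then there exists a constant C, independent of N and j, such that |τ₀| ≤ C h^{δ−1}, |τ₁| ≤ C, |τ_j| ≤ C (j−1)^{1−δ} for j = 2, …, N−1, and |τ_N| ≤ C α₁ h. -/
/-- The coefficients `d_r = (max(r,0))^{2−δ} − (max(r−1,0))^{2−δ}` of the standard
discretization of the Caputo derivative of order `δ ∈ (1,2)`. -/
noncomputable def dCoef (δ : ℝ) (r : ℕ) : ℝ :=
  (max (r:ℝ) 0) ^ (2 - δ) - (max ((r:ℝ) - 1) 0) ^ (2 - δ)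

/-- First derivative within `[0,1]`. -/
noncomputable def du (u : ℝ → ℝ) : ℝ → ℝ := derivWithin u (Set.Icc 0 1)

/-- The Caputo fractional derivative of order `δ ∈ (1,2)`:
`D*^δ u (x) = (1/Γ(2-δ)) ∫₀ˣ (x-t)^(1-δ) u''(t) dt`. -/
noncomputable def caputoW (δ : ℝ) (u : ℝ → ℝ) (x : ℝ) : ℝ :=
  (1 / Real.Gamma (2 - δ)) *
    ∫ t in (0:ℝ)..x, (x - t) ^ (1 - δ) * du (du u) t

/-- The truncation error `τ_j` of the finite difference scheme on the uniform mesh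
`x_i = i/N`, for `0 ≤ j ≤ N`. -/
noncomputable def trunc (δ α₀ α₁ : ℝ) (b c u : ℝ → ℝ) (N j : ℕ) : ℝ :=
  let h : ℝ := 1 / N
  let x : ℕ → ℝ := fun i => (i:ℝ) * h
  if j = 0 then α₀ * du u 0 - (α₀ / h) * (u (x 1) - u (x 0))
  else if j = N then -α₁ * du u (x N) + (α₁ / h) * (u (x N) - u (x (N - 1)))
  else
    (-(1 / (h ^ δ * Real.Gamma (3 - δ))) *
        (∑ k ∈ Finset.range j, dCoef δ (j - k) *
          (u (x (k + 2)) - 2 * u (x (k + 1)) + u (x k)))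
      + b (x j) * (if b (x j) < 0 then (u (x (j + 1)) - u (x j)) / h
          else (u (x j) - u (x (j - 1))) / h)
      + c (x j) * u (x j))
    - (-caputoW δ u (x j) + b (x j) * du u (x j) + c (x j) * u (x j))

open Set MeasureTheory

lemma reg_step (f : ℝ → ℝ) (n : ℕ) (hf : ContDiffOn ℝ (n+1) f (Ioc 0 1)) :
    ContDiffOn ℝ n (du f) (Ioc 0 1) ∧ ∀ x ∈ Ioo (0:ℝ) 1, HasDerivAt f (du f x) x := by
  have hud : UniqueDiffOn ℝ (Ioc (0:ℝ) 1) := uniqueDiffOn_Ioc 0 1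
  have h1 := (contDiffOn_succ_iff_derivWithin hud).1 hf
  have hEq : EqOn (du f) (derivWithin f (Ioc 0 1)) (Ioc 0 1) := by
    intro x hx
    apply derivWithin_congr_set
    filter_upwards [Ioi_mem_nhds hx.1] with y hy
    simp only [eq_iff_iff]
    constructor
    · intro h; exact ⟨hy, h.2⟩
    · intro h; exact ⟨h.1.le, h.2⟩
  refine ⟨h1.2.2.congr hEq, ?_⟩
  intro x hx
  have h2 : DifferentiableAt ℝ f x := (h1.1 x ⟨hx.1, hx.2.le⟩).differentiableAt (Ioc_mem_nhds hx.1 hx.2)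
  have : du f x = deriv f x := derivWithin_of_mem_nhds (Icc_mem_nhds hx.1 hx.2)
  rw [this]; exact h2.hasDerivAt

lemma mvt (f f' : ℝ → ℝ) (a b : ℝ) (hab : a < b) (hc : ContinuousOn f (Icc a b))
    (hd : ∀ x ∈ Ioo a b, HasDerivAt f (f' x) x) : ∃ ξ ∈ Ioo a b, f b - f a = f' ξ * (b - a) := by
  obtain ⟨c, hc, h⟩ := exists_hasDerivAt_eq_slope f f' hab hc hd
  refine ⟨c, hc, ?_⟩
  rw [h, div_mul_cancel₀]; linarith

lemma holder (δ : ℝ) (hδ1 : 1 < δ) (C : ℝ) (v g : ℝ → ℝ) (hv : ContinuousOn v (Icc 0 1))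
    (hv' : ∀ x ∈ Ioo (0:ℝ) 1, HasDerivAt v (g x) x)
    (hg : ∀ x ∈ Ioc (0:ℝ) 1, |g x| ≤ C * x ^ (δ - 2)) (x y : ℝ) (hx : 0 ≤ x) (hxy : x ≤ y)
    (hy : y ≤ 1) : |v y - v x| ≤ C / (δ - 1) * (y ^ (δ - 1) - x ^ (δ - 1)) := by
  have key : ∀ s : ℝ, |s| ≤ 1 → MonotoneOn (fun t => C / (δ - 1) * t ^ (δ - 1) + s * v t) (Icc 0 1) := by
    intro s hs
    have hd : ∀ t ∈ Ioo (0:ℝ) 1, HasDerivAt (fun t => C / (δ - 1) * t ^ (δ - 1) + s * v t)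
        (C * t ^ (δ - 2) + s * g t) t := by
      intro t ht
      have h1 := (Real.hasDerivAt_rpow_const (x := t) (p := δ - 1) (Or.inl ht.1.ne')).const_mul (C / (δ - 1))
      have h2 := h1.add ((hv' t ht).const_mul s)
      refine h2.congr_deriv ?_
      have : δ - 1 ≠ 0 := by linarith
      rw [show δ - 1 - 1 = δ - 2 by ring]
      field_simp
    apply monotoneOn_of_deriv_nonneg (convex_Icc 0 1)
    · apply ContinuousOn.add
      · apply ContinuousOn.mul continuousOn_const
        apply ContinuousOn.rpow_const continuousOn_id
        intro z hz; right; linarith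
      · exact continuousOn_const.mul hv
    · rw [interior_Icc]; intro t ht; exact (hd t ht).differentiableAt.differentiableWithinAt
    · rw [interior_Icc]; intro t ht; rw [(hd t ht).deriv]
      have h3 := hg t ⟨ht.1, ht.2.le⟩
      have h4 : |s * g t| ≤ |g t| := by
        rw [abs_mul]; nlinarith [abs_nonneg (g t)]
      have := neg_abs_le (s * g t)
      linarith
  have hxm : x ∈ Icc (0:ℝ) 1 := ⟨hx, by linarith⟩
  have hym : y ∈ Icc (0:ℝ) 1 := ⟨by linarith, by linarith⟩
  have k1 := key 1 (by simp) hxm hym hxy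
  have k2 := key (-1) (by simp) hxm hym hxy
  simp only at k1 k2
  rw [abs_le]; constructor <;> linarith

lemma lip (C e : ℝ) (hC : 0 ≤ C) (he : e ≤ 0) (v g : ℝ → ℝ) (hv : ContinuousOn v (Ioc 0 1))
    (hv' : ∀ x ∈ Ioo (0:ℝ) 1, HasDerivAt v (g x) x)
    (hg : ∀ x ∈ Ioc (0:ℝ) 1, |g x| ≤ C * x ^ e) (a d x y : ℝ) (ha : 0 < a) (hx : x ∈ Icc a (a+d))
    (hy : y ∈ Icc a (a+d)) (had : a + d ≤ 1) : |v y - v x| ≤ C * a ^ e * d := by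
  wlog hxy : x ≤ y generalizing x y
  · rw [abs_sub_comm]; exact this y x hy hx (by linarith)
  have hae : 0 ≤ C * a ^ e := mul_nonneg hC (Real.rpow_nonneg ha.le _)
  have hd : 0 ≤ d := by linarith [hx.1, hx.2]
  rcases hxy.eq_or_lt with rfl | hlt
  · simp; positivity
  obtain ⟨ξ, hξ, h⟩ := mvt v g x y hlt (hv.mono fun z hz => ⟨by linarith [hz.1, hx.1], by linarith [hz.2, hy.2]⟩)
    (fun z hz => hv' z ⟨by linarith [hz.1, hx.1], by linarith [hz.2, hy.2]⟩)
  rw [h, abs_mul]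
  have h1 := hg ξ ⟨by linarith [hξ.1, hx.1], by linarith [hξ.2, hy.2]⟩
  have h2 : ξ ^ e ≤ a ^ e := Real.rpow_le_rpow_of_nonpos ha (by linarith [hξ.1, hx.1]) he
  rw [abs_of_pos (by linarith : 0 < y - x)]
  apply mul_le_mul (h1.trans (mul_le_mul_of_nonneg_left h2 hC)) _ (by linarith) hae
  linarith [hx.1, hy.2]

/-- second difference -/
lemma secdiff (u v : ℝ → ℝ) (hu : ContinuousOn u (Icc 0 1))
    (hu' : ∀ x ∈ Ioo (0:ℝ) 1, HasDerivAt u (v x) x) (a h : ℝ) (ha : 0 ≤ a) (hh : 0 < h)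
    (hah : a + 2 * h ≤ 1) : ∃ ξ ∈ Ioo a (a + h),
      u (a + 2 * h) - 2 * u (a + h) + u a = (v (ξ + h) - v ξ) * h := by
  obtain ⟨ξ, hξ, e⟩ := mvt (fun s => u (s + h) - u s) (fun s => v (s + h) - v s) a (a + h) (by linarith) 
    (by
      apply ContinuousOn.sub
      · apply hu.comp (by fun_prop)
        intro z hz; exact ⟨by linarith [hz.1], by linarith [hz.2]⟩
      · apply hu.mono
        intro z hz; exact ⟨by linarith [hz.1], by linarith [hz.2]⟩)
    (by
      intro z hz
      apply HasDerivAt.sub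
      · exact (hu' (z+h) ⟨by linarith [hz.1], by linarith [hz.2]⟩).comp_add_const z h
      · exact hu' z ⟨by linarith [hz.1], by linarith [hz.2]⟩)
  refine ⟨ξ, hξ, ?_⟩
  rw [show a + h + h = a + 2 * h by ring, show a + h - a = h by ring] at e
  linarith

lemma kint (δ : ℝ) (hδ2 : δ < 2) (X a b : ℝ) :
    IntervalIntegrable (fun t => (X - t) ^ (1 - δ)) volume a b := by
  have := (intervalIntegral.intervalIntegrable_rpow' (a := X - a) (b := X - b) (r := 1 - δ) (by linarith)).comp_sub_left X
  simpa using this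

lemma weight (δ : ℝ) (hδ2 : δ < 2) (h : ℝ) (hh : 0 < h) (j k : ℕ) (hkj : k < j) :
    ∫ t in (k * h)..((k + 1 : ℕ) * h), (j * h - t) ^ (1 - δ) =
      h ^ (2 - δ) / (2 - δ) * dCoef δ (j - k) := by
  rw [intervalIntegral.integral_comp_sub_left (fun t => t ^ (1 - δ))]
  rw [integral_rpow (Or.inl (by linarith))]
  have hk : ((j - k : ℕ) : ℝ) = j - k := by rw [Nat.cast_sub hkj.le]
  have h1 : (1:ℝ) ≤ j - k := by
    rw [← hk]; exact_mod_cast (by omega : 1 ≤ j - k)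
  unfold dCoef
  rw [hk, max_eq_left (by linarith), max_eq_left (by linarith)]
  push_cast
  rw [show (j:ℝ) * h - k * h = h * (j - k) by ring, show (j:ℝ) * h - (k + 1) * h = h * (j - k - 1) by ring,
    Real.mul_rpow hh.le (by linarith), Real.mul_rpow hh.le (by linarith), show 1 - δ + 1 = 2 - δ by ring]
  ring

lemma d_nonneg (δ : ℝ) (hδ2 : δ < 2) (r : ℕ) : 0 ≤ dCoef δ r := by
  unfold dCoef
  rw [sub_nonneg]
  apply Real.rpow_le_rpow (le_max_right _ _) _ (by linarith)
  apply max_le_max_right; linarith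

lemma d_le (δ : ℝ) (hδ1 : 1 < δ) (hδ2 : δ < 2) (r : ℕ) : dCoef δ (r + 1) ≤ ((r:ℝ) + 1) ^ (1 - δ) := by
  unfold dCoef
  push_cast
  have hr : (0:ℝ) ≤ r := r.cast_nonneg
  rw [max_eq_left (by linarith), show (r:ℝ) + 1 - 1 = r by ring, max_eq_left hr]
  rcases hr.eq_or_lt with h0 | h0
  · rw [← h0]; simp [Real.zero_rpow (by linarith : 2 - δ ≠ 0)]
  · have e1 : ((r:ℝ)+1) ^ (2 - δ) = ((r:ℝ)+1)^(1-δ) * (r + 1) := by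
      rw [show 2 - δ = 1 - δ + 1 by ring, Real.rpow_add_one (by linarith)]
    have e2 : (r:ℝ) ^ (2 - δ) = (r:ℝ)^(1-δ) * r := by
      rw [show 2 - δ = 1 - δ + 1 by ring, Real.rpow_add_one (by linarith)]
    have e3 : ((r:ℝ)+1)^(1-δ) ≤ (r:ℝ)^(1-δ) := Real.rpow_le_rpow_of_nonpos h0 (by linarith) (by linarith)
    rw [e1, e2]; nlinarith

lemma d_sum (δ : ℝ) (hδ2 : δ < 2) (m : ℕ) : ∑ i ∈ Finset.range m, dCoef δ (i + 1) = (m:ℝ) ^ (2 - δ) := by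
  induction m with
  | zero => simp [Real.zero_rpow (by linarith : 2 - δ ≠ 0)]
  | succ m ih =>
    rw [Finset.sum_range_succ, ih]
    unfold dCoef
    have hr : (0:ℝ) ≤ m := m.cast_nonneg
    push_cast
    rw [max_eq_left (by linarith), show (m:ℝ) + 1 - 1 = m by ring, max_eq_left hr]
    ring

lemma conv_sum (δ : ℝ) (hδ1 : 1 < δ) (hδ2 : δ < 2) : ∃ Z : ℝ, 0 ≤ Z ∧ ∀ m : ℕ, 1 ≤ m →
    ∑ i ∈ Finset.range m, dCoef δ (m + 1 - (i + 1)) * ((i:ℝ) + 1) ^ (δ - 3) ≤ Z * (m:ℝ) ^ (1 - δ) := by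
  have hs : Summable (fun i : ℕ => ((i:ℝ) + 1) ^ (δ - 3)) := by
    have := (summable_nat_add_iff 1).2 (Real.summable_nat_rpow.2 (by linarith : δ - 3 < -1))
    simpa using this
  set Z := ∑' i : ℕ, ((i:ℝ) + 1) ^ (δ - 3) with hZ
  have hZ0 : 0 ≤ Z := tsum_nonneg fun i => by positivity
  have c1 : (0:ℝ) ≤ (1/2:ℝ) ^ (1 - δ) := by positivity
  have c2 : (0:ℝ) ≤ (1/2:ℝ) ^ (δ - 3) := by positivity
  refine ⟨(1/2) ^ (1 - δ) * Z + (1/2) ^ (δ - 3), by positivity, ?_⟩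
  intro m hm
  have hm0 : (1:ℝ) ≤ m := by exact_mod_cast hm
  have hm1 : (0:ℝ) < m / 2 := by positivity
  have step : ∀ i ∈ Finset.range m, dCoef δ (m + 1 - (i + 1)) * ((i:ℝ) + 1) ^ (δ - 3) ≤
      (m / 2 : ℝ) ^ (1 - δ) * ((i:ℝ) + 1) ^ (δ - 3) + (m / 2 : ℝ) ^ (δ - 3) * dCoef δ (m - 1 - i + 1) := by
    intro i hi
    rw [Finset.mem_range] at hi
    have e : m + 1 - (i + 1) = m - 1 - i + 1 := by omega
    rw [e]
    have hd0 := d_nonneg δ hδ2 (m - 1 - i + 1)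
    have hi0 : (0:ℝ) ≤ ((i:ℝ) + 1) ^ (δ - 3) := by positivity
    have hp1 : (0:ℝ) ≤ (m / 2 : ℝ) ^ (1 - δ) := by positivity
    have hp2 : (0:ℝ) ≤ (m / 2 : ℝ) ^ (δ - 3) := by positivity
    rcases le_total ((i:ℝ) + 1) (m / 2) with hle | hle
    · have h1 := d_le δ hδ1 hδ2 (m - 1 - i)
      have h2 : (((m - 1 - i : ℕ) : ℝ) + 1) = m - i := by
        rw [← Nat.cast_add_one, show m - 1 - i + 1 = m - i by omega, Nat.cast_sub hi.le]
      rw [h2] at h1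
      have h3 : ((m:ℝ) - i) ^ (1 - δ) ≤ (m / 2 : ℝ) ^ (1 - δ) :=
        Real.rpow_le_rpow_of_nonpos hm1 (by linarith) (by linarith)
      have := mul_le_mul_of_nonneg_right (h1.trans h3) hi0
      have := mul_nonneg hp2 hd0
      linarith
    · have h3 : ((i:ℝ) + 1) ^ (δ - 3) ≤ (m / 2 : ℝ) ^ (δ - 3) :=
        Real.rpow_le_rpow_of_nonpos hm1 (by linarith) (by linarith)
      have := mul_le_mul_of_nonneg_right h3 hd0
      have := mul_nonneg hp1 hi0
      linarith
  refine (Finset.sum_le_sum step).trans ?_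
  rw [Finset.sum_add_distrib, ← Finset.mul_sum, ← Finset.mul_sum,
    Finset.sum_range_reflect (fun i => dCoef δ (i + 1)) m, d_sum δ hδ2]
  have s1 : ∑ i ∈ Finset.range m, ((i:ℝ) + 1) ^ (δ - 3) ≤ Z := hs.sum_le_tsum _ (fun i _ => by positivity)
  have s2 : (m / 2 : ℝ) ^ (1 - δ) = (1/2) ^ (1 - δ) * (m:ℝ) ^ (1 - δ) := by
    rw [← Real.mul_rpow (by norm_num) (by positivity)]; congr 1; ring
  have s3 : (m / 2 : ℝ) ^ (δ - 3) * (m:ℝ) ^ (2 - δ) ≤ (1/2) ^ (δ - 3) * (m:ℝ) ^ (1 - δ) := by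
    rw [show (m / 2 : ℝ) = 1 / 2 * m by ring, Real.mul_rpow (by norm_num) (by positivity), mul_assoc,
      ← Real.rpow_add (by positivity)]
    apply mul_le_mul_of_nonneg_left _ c2
    apply Real.rpow_le_rpow_of_exponent_le hm0; linarith
  rw [s2]
  have s4 := mul_le_mul_of_nonneg_left s1 (mul_nonneg c1 (by positivity : (0:ℝ) ≤ (m:ℝ) ^ (1 - δ)))
  linarith

lemma errk (δ : ℝ) (hδ2 : δ < 2) (C : ℝ) (hC : 0 ≤ C) (u v g w : ℝ → ℝ)
    (hu : ContinuousOn u (Icc 0 1)) (hu' : ∀ x ∈ Ioo (0:ℝ) 1, HasDerivAt u (v x) x)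
    (hv : ContinuousOn v (Icc 0 1)) (hv' : ∀ x ∈ Ioo (0:ℝ) 1, HasDerivAt v (g x) x)
    (hg : ContinuousOn g (Ioc 0 1)) (hg' : ∀ x ∈ Ioo (0:ℝ) 1, HasDerivAt g (w x) x)
    (hw : ∀ x ∈ Ioc (0:ℝ) 1, |w x| ≤ C * x ^ (δ - 3))
    (a h X : ℝ) (ha : 0 < a) (hh : 0 < h) (hah : a + 2 * h ≤ 1) (hX : a + h ≤ X) :
    IntervalIntegrable (fun t => (X - t) ^ (1 - δ) * g t) volume a (a + h) ∧
    |(∫ t in a..(a + h), (X - t) ^ (1 - δ) * g t) -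
      (∫ t in a..(a + h), (X - t) ^ (1 - δ)) * ((u (a + 2 * h) - 2 * u (a + h) + u a) / h ^ 2)| ≤
      (∫ t in a..(a + h), (X - t) ^ (1 - δ)) * (C * a ^ (δ - 3) * (2 * h)) := by
  have hk := kint δ hδ2 X a (a + h)
  have hI : IntervalIntegrable (fun t => (X - t) ^ (1 - δ) * g t) volume a (a + h) := by
    apply hk.mul_continuousOn
    apply hg.mono
    rw [uIcc_of_le (by linarith)]
    intro z hz; exact ⟨by linarith [hz.1], by linarith [hz.2]⟩
  refine ⟨hI, ?_⟩
  obtain ⟨ξ, hξ, e⟩ := secdiff u v hu hu' a h ha.le hh hah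
  obtain ⟨η, hη, e2⟩ := mvt v g ξ (ξ + h) (by linarith)
    (hv.mono fun z hz => ⟨by linarith [hz.1, hξ.1], by linarith [hz.2, hξ.2]⟩)
    (fun z hz => hv' z ⟨by linarith [hz.1, hξ.1], by linarith [hz.2, hξ.2]⟩)
  have e3 : (u (a + 2 * h) - 2 * u (a + h) + u a) / h ^ 2 = g η := by
    rw [e, e2]; field_simp; ring
  rw [e3, ← intervalIntegral.integral_mul_const, ← intervalIntegral.integral_sub hI (hk.mul_const _),
    ← intervalIntegral.integral_mul_const, ← Real.norm_eq_abs]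
  apply intervalIntegral.norm_integral_le_of_norm_le (by linarith) _ (hk.mul_const _)
  filter_upwards with t ht
  have hp : 0 ≤ (X - t) ^ (1 - δ) := Real.rpow_nonneg (by linarith [ht.2]) _
  rw [← mul_sub, Real.norm_eq_abs, abs_mul, abs_of_nonneg hp]
  apply mul_le_mul_of_nonneg_left _ hp
  exact lip C (δ - 3) hC (by linarith) g w hg hg' hw a (2 * h) η t ha
    ⟨by linarith [hη.1, hξ.1], by linarith [hη.2, hξ.2]⟩ ⟨ht.1.le, by linarith [ht.2]⟩ hah

/-- the integral over the first cell, away from the evaluation point -/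
lemma err0 (δ : ℝ) (hδ1 : 1 < δ) (C : ℝ) (_hC : 0 ≤ C) (g : ℝ → ℝ)
    (hg : ContinuousOn g (Ioc 0 1)) (hgb : ∀ x ∈ Ioc (0:ℝ) 1, |g x| ≤ C * x ^ (δ - 2))
    (h X : ℝ) (hh : 0 < h) (hh1 : h ≤ 1) (hX : h < X) :
    IntervalIntegrable (fun t => (X - t) ^ (1 - δ) * g t) volume 0 h ∧
    |∫ t in (0:ℝ)..h, (X - t) ^ (1 - δ) * g t| ≤
      (X - h) ^ (1 - δ) * (C / (δ - 1) * h ^ (δ - 1)) := by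
  have hb : IntervalIntegrable (fun t : ℝ => (X - h) ^ (1 - δ) * (C * t ^ (δ - 2))) volume 0 h :=
    ((intervalIntegral.intervalIntegrable_rpow' (by linarith)).const_mul _).const_mul _
  have hbd : ∀ t ∈ Ioc 0 h, ‖(X - t) ^ (1 - δ) * g t‖ ≤ (X - h) ^ (1 - δ) * (C * t ^ (δ - 2)) := by
    intro t ht
    have hp : 0 ≤ (X - t) ^ (1 - δ) := Real.rpow_nonneg (by linarith [ht.2]) _
    rw [Real.norm_eq_abs, abs_mul, abs_of_nonneg hp]
    apply mul_le_mul _ (hgb t ⟨ht.1, by linarith [ht.2]⟩) (abs_nonneg _) (Real.rpow_nonneg (by linarith) _)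
    exact Real.rpow_le_rpow_of_nonpos (by linarith) (by linarith [ht.2]) (by linarith)
  constructor
  · apply hb.mono_fun'
    · rw [uIoc_of_le hh.le]
      apply ContinuousOn.aestronglyMeasurable _ measurableSet_Ioc
      apply ContinuousOn.mul
      · apply ContinuousOn.rpow_const (by fun_prop)
        intro z hz; left; have := hz.2; intro h0; linarith
      · exact hg.mono fun z hz => ⟨hz.1, by linarith [hz.2]⟩
    · rw [uIoc_of_le hh.le]
      exact (ae_restrict_mem measurableSet_Ioc).mono hbd
  · rw [← Real.norm_eq_abs]
    refine (intervalIntegral.norm_integral_le_of_norm_le hh.le (Filter.Eventually.of_forall hbd) hb).trans ?_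
    rw [intervalIntegral.integral_const_mul, intervalIntegral.integral_const_mul,
      integral_rpow (Or.inl (by linarith)), show δ - 2 + 1 = δ - 1 by ring,
      Real.zero_rpow (by linarith)]
    apply le_of_eq; ring

lemma err1 (δ : ℝ) (hδ1 : 1 < δ) (hδ2 : δ < 2) (C : ℝ) (hC : 0 ≤ C) (g : ℝ → ℝ)
    (hgb : ∀ x ∈ Ioc (0:ℝ) 1, |g x| ≤ C * x ^ (δ - 2))
    (h : ℝ) (hh : 0 < h) (hh1 : h ≤ 1) :
    |∫ t in (0:ℝ)..h, (h - t) ^ (1 - δ) * g t| ≤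
      C * ((1/2) ^ (δ - 2) / (2 - δ) + (1/2) ^ (1 - δ) / (δ - 1)) := by
  have hb1 : IntervalIntegrable (fun t : ℝ => (1/2 * h) ^ (δ - 2) * (h - t) ^ (1 - δ)) volume 0 h :=
    (kint δ hδ2 h 0 h).const_mul _
  have hb2 : IntervalIntegrable (fun t : ℝ => (1/2 * h) ^ (1 - δ) * t ^ (δ - 2)) volume 0 h :=
    (intervalIntegral.intervalIntegrable_rpow' (by linarith)).const_mul _
  have hb := (hb1.add hb2).const_mul C
  have h2 : 0 < 1/2 * h := by positivity
  rw [← Real.norm_eq_abs]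
  refine (intervalIntegral.norm_integral_le_of_norm_le hh.le
    (g := fun t => C * ((1/2 * h) ^ (δ - 2) * (h - t) ^ (1 - δ) + (1/2 * h) ^ (1 - δ) * t ^ (δ - 2)))
    (Filter.Eventually.of_forall ?_) hb).trans ?_
  · intro t ht
    have hp : 0 ≤ (h - t) ^ (1 - δ) := Real.rpow_nonneg (by linarith [ht.2]) _
    have hq : 0 ≤ t ^ (δ - 2) := Real.rpow_nonneg ht.1.le _
    rw [Real.norm_eq_abs, abs_mul, abs_of_nonneg hp]
    refine (mul_le_mul_of_nonneg_left (hgb t ⟨ht.1, by linarith [ht.2]⟩) hp).trans ?_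
    rw [mul_left_comm]
    apply mul_le_mul_of_nonneg_left _ hC
    have p1 : 0 ≤ (1/2 * h) ^ (δ - 2) := Real.rpow_nonneg h2.le _
    have p2 : 0 ≤ (1/2 * h) ^ (1 - δ) := Real.rpow_nonneg h2.le _
    rcases le_total t (1/2 * h) with hle | hle
    · have : (h - t) ^ (1 - δ) ≤ (1/2 * h) ^ (1 - δ) :=
        Real.rpow_le_rpow_of_nonpos h2 (by linarith) (by linarith)
      have := mul_le_mul_of_nonneg_right this hq
      have := mul_nonneg p1 hp
      linarith
    · have : t ^ (δ - 2) ≤ (1/2 * h) ^ (δ - 2) :=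
        Real.rpow_le_rpow_of_nonpos h2 (by linarith) (by linarith)
      have := mul_le_mul_of_nonneg_right this hp
      have := mul_nonneg p2 hq
      linarith
  · rw [intervalIntegral.integral_const_mul, intervalIntegral.integral_add hb1 hb2,
      intervalIntegral.integral_const_mul, intervalIntegral.integral_const_mul,
      intervalIntegral.integral_comp_sub_left (fun t => t ^ (1 - δ)),
      integral_rpow (Or.inl (by linarith)), integral_rpow (Or.inl (by linarith)),
      show δ - 2 + 1 = δ - 1 by ring, show 1 - δ + 1 = 2 - δ by ring, sub_self, sub_zero,
      Real.zero_rpow (by linarith), Real.zero_rpow (by linarith),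
      Real.mul_rpow (by norm_num) hh.le, Real.mul_rpow (by norm_num) hh.le]
    have q1 : h ^ (δ - 2) * h ^ (2 - δ) = 1 := by
      rw [← Real.rpow_add hh]; simp
    have q2 : h ^ (1 - δ) * h ^ (δ - 1) = 1 := by
      rw [← Real.rpow_add hh]; simp
    apply le_of_eq
    congr 1
    congr 1
    · linear_combination ((1/2) ^ (δ - 2) / (2 - δ)) * q1
    · linear_combination ((1/2) ^ (1 - δ) / (δ - 1)) * q2

lemma first_diff (δ : ℝ) (hδ1 : 1 < δ) (C : ℝ) (hC : 0 ≤ C) (u v g : ℝ → ℝ)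
    (hu : ContinuousOn u (Icc 0 1)) (hu' : ∀ x ∈ Ioo (0:ℝ) 1, HasDerivAt u (v x) x)
    (hv : ContinuousOn v (Icc 0 1)) (hv' : ∀ x ∈ Ioo (0:ℝ) 1, HasDerivAt v (g x) x)
    (hgb : ∀ x ∈ Ioc (0:ℝ) 1, |g x| ≤ C * x ^ (δ - 2)) (h : ℝ) (hh : 0 < h) (hh2 : 2 * h ≤ 1) :
    |u (2 * h) - 2 * u h + u 0| ≤ C / (δ - 1) * 2 ^ (δ - 1) * h ^ δ := by
  obtain ⟨ξ, hξ, e⟩ := secdiff u v hu hu' 0 h le_rfl hh (by linarith)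
  simp only [zero_add] at e hξ
  rw [e, abs_mul, abs_of_pos hh]
  have h1 := holder δ hδ1 C v g hv hv' hgb ξ (ξ + h) hξ.1.le (by linarith) (by linarith [hξ.2])
  have hK : 0 ≤ C / (δ - 1) := div_nonneg hC (by linarith)
  have h2 : (ξ + h) ^ (δ - 1) ≤ 2 ^ (δ - 1) * h ^ (δ - 1) := by
    rw [← Real.mul_rpow (by norm_num) hh.le]
    exact Real.rpow_le_rpow (by linarith [hξ.1]) (by linarith [hξ.2]) (by linarith)
  have h3 : 0 ≤ ξ ^ (δ - 1) := Real.rpow_nonneg hξ.1.le _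
  have h4 : h ^ δ = h ^ (δ - 1) * h := by
    rw [← Real.rpow_add_one hh.ne']; congr 1; ring
  rw [h4]
  have h5 : |v (ξ + h) - v ξ| ≤ C / (δ - 1) * (2 ^ (δ - 1) * h ^ (δ - 1)) :=
    h1.trans (mul_le_mul_of_nonneg_left (by linarith) hK)
  have := mul_le_mul_of_nonneg_right h5 hh.le
  linarith

/-- The error of the discrete Caputo operator. -/
lemma caputo_err (δ : ℝ) (hδ1 : 1 < δ) (hδ2 : δ < 2) (C : ℝ) (hC : 0 ≤ C) (u v g w : ℝ → ℝ)
    (hu : ContinuousOn u (Icc 0 1)) (hu' : ∀ x ∈ Ioo (0:ℝ) 1, HasDerivAt u (v x) x)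
    (hv : ContinuousOn v (Icc 0 1)) (hv' : ∀ x ∈ Ioo (0:ℝ) 1, HasDerivAt v (g x) x)
    (hg : ContinuousOn g (Ioc 0 1)) (hg' : ∀ x ∈ Ioo (0:ℝ) 1, HasDerivAt g (w x) x)
    (hgb : ∀ x ∈ Ioc (0:ℝ) 1, |g x| ≤ C * x ^ (δ - 2))
    (hw : ∀ x ∈ Ioc (0:ℝ) 1, |w x| ≤ C * x ^ (δ - 3)) :
    ∃ K : ℝ, 0 ≤ K ∧ ∀ (h : ℝ) (m : ℕ), 0 < h → ((m:ℝ) + 2) * h ≤ 1 →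
      |(∫ t in (0:ℝ)..((m + 1 : ℕ) * h), ((m + 1 : ℕ) * h - t) ^ (1 - δ) * g t) -
        ∑ k ∈ Finset.range (m + 1), 1 / (h ^ δ * (2 - δ)) * (dCoef δ (m + 1 - k) *
          (u ((k + 2 : ℕ) * h) - 2 * u ((k + 1 : ℕ) * h) + u (k * h)))| ≤
        K * (if m = 0 then 1 else (m:ℝ) ^ (1 - δ)) := by
  obtain ⟨Z, hZ, hZs⟩ := conv_sum δ hδ1 hδ2
  have hd1 : 0 < δ - 1 := by linarith
  have hd2 : 0 < 2 - δ := by linarith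
  set A := C * ((1/2) ^ (δ - 2) / (2 - δ) + (1/2) ^ (1 - δ) / (δ - 1)) with hA
  have hA0 : 0 ≤ A := by positivity
  set B := C / (δ - 1) * 2 ^ (δ - 1) / (2 - δ) with hB
  have hB0 : 0 ≤ B := by positivity
  have hCd : 0 ≤ C / (δ - 1) := by positivity
  -- the first cell's difference
  have first : ∀ (h : ℝ) (m : ℕ), 0 < h → ((m:ℝ) + 2) * h ≤ 1 →
      |1 / (h ^ δ * (2 - δ)) * (dCoef δ (m + 1) * (u (2 * h) - 2 * u h + u 0))| ≤
        B * ((m:ℝ) + 1) ^ (1 - δ) := by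
    intro h m hh hm
    have hm0 : (0:ℝ) ≤ m := m.cast_nonneg
    have h2 : 2 * h ≤ 1 := by nlinarith
    have f := first_diff δ hδ1 C hC u v g hu hu' hv hv' hgb h hh h2
    have hp : 0 < h ^ δ := Real.rpow_pos_of_pos hh _
    rw [abs_mul, abs_mul, abs_of_nonneg (d_nonneg δ hδ2 (m+1)), abs_of_pos (by positivity)]
    have := mul_le_mul (d_le δ hδ1 hδ2 m) f (abs_nonneg _) (by positivity)
    have := mul_le_mul_of_nonneg_left this (by positivity : 0 ≤ 1 / (h ^ δ * (2 - δ)))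
    refine this.trans (le_of_eq ?_)
    rw [hB]; field_simp
  refine ⟨A + B + C / (δ - 1) + 2 * C / (2 - δ) * Z, by positivity, ?_⟩
  intro h m hh hm
  have hm0 : (0:ℝ) ≤ m := m.cast_nonneg
  have h1 : h ≤ 1 := by nlinarith
  have hF := first h m hh hm
  rcases Nat.eq_zero_or_pos m with rfl | hmpos
  · simp only [if_true, mul_one, Finset.sum_range_one, zero_add, Nat.cast_one, one_mul, Nat.cast_zero, zero_mul,
      Nat.cast_ofNat, Nat.sub_zero, Real.one_rpow] at hF ⊢
    have := err1 δ hδ1 hδ2 C hC g hgb h hh h1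
    refine (abs_sub _ _).trans ?_
    have : 0 ≤ 2 * C / (2 - δ) * Z := by positivity
    linarith
  · have hm1 : (1:ℝ) ≤ m := by exact_mod_cast hmpos
    rw [if_neg hmpos.ne']
    set X : ℝ := (m + 1 : ℕ) * h with hX
    have hXe : X = (m + 1) * h := by rw [hX]; push_cast; ring
    have e0 := err0 δ hδ1 C hC g hg hgb h X hh h1 (by rw [hXe]; nlinarith)
    have ek : ∀ i < m, IntervalIntegrable (fun t => (X - t) ^ (1 - δ) * g t) volume
          ((i + 1 : ℕ) * h) ((i + 1 + 1 : ℕ) * h) ∧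
        |(∫ t in ((i + 1 : ℕ) * h)..((i + 1 + 1 : ℕ) * h), (X - t) ^ (1 - δ) * g t) -
          1 / (h ^ δ * (2 - δ)) * (dCoef δ (m + 1 - (i + 1)) *
          (u ((i + 1 + 2 : ℕ) * h) - 2 * u ((i + 1 + 1 : ℕ) * h) + u ((i + 1 : ℕ) * h)))| ≤
          2 * C / (2 - δ) * (dCoef δ (m + 1 - (i + 1)) * ((i:ℝ) + 1) ^ (δ - 3)) := by
      intro i hi
      have hi1 : (i:ℝ) + 1 ≤ m := by exact_mod_cast hi
      have hi0 : (0:ℝ) ≤ i := i.cast_nonneg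
      have := errk δ hδ2 C hC u v g w hu hu' hv hv' hg hg' hw ((i + 1 : ℕ) * h) h X (by positivity) hh
        (by push_cast; nlinarith) (by rw [hXe]; push_cast; nlinarith)
      have a1 : ((i + 1 : ℕ) : ℝ) * h + h = (i + 1 + 1 : ℕ) * h := by push_cast; ring
      have a2 : ((i + 1 : ℕ) : ℝ) * h + 2 * h = (i + 1 + 2 : ℕ) * h := by push_cast; ring
      rw [a1, a2, hX, weight δ hδ2 h hh (m + 1) (i + 1) (by omega), ← hX] at this
      refine ⟨this.1, ?_⟩
      have r1 : h ^ (2 - δ) = h ^ 2 / h ^ δ := by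
        rw [Real.rpow_sub hh]; norm_num
      have r2 : ((i + 1 : ℕ) * h : ℝ) ^ (δ - 3) = ((i:ℝ) + 1) ^ (δ - 3) * (h ^ δ / h ^ 3) := by
        rw [Real.mul_rpow (by positivity) hh.le, Real.rpow_sub hh]; norm_num
      have hp : 0 < h ^ δ := Real.rpow_pos_of_pos hh _
      have t2 := this.2
      rw [r2, r1] at t2
      convert t2 using 1
      · congr 2
        field_simp
      · field_simp
    have split : (∫ t in (0:ℝ)..X, (X - t) ^ (1 - δ) * g t) =
        ∑ k ∈ Finset.range (m + 1), ∫ t in ((k : ℕ) * h)..((k + 1 : ℕ) * h), (X - t) ^ (1 - δ) * g t := by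
      have := intervalIntegral.sum_integral_adjacent_intervals (μ := volume)
        (f := fun t => (X - t) ^ (1 - δ) * g t) (a := fun k : ℕ => (k:ℝ) * h) (n := m + 1) (by
          intro k hk
          rcases k with _ | i
          · simpa using e0.1
          · exact (ek i (by omega)).1)
      rw [this]; simp [hX]
    rw [split, ← Finset.sum_sub_distrib, Finset.sum_range_succ']
    have hS : |∑ i ∈ Finset.range m, ((∫ t in ((i + 1 : ℕ) * h)..((i + 1 + 1 : ℕ) * h), (X - t) ^ (1 - δ) * g t) -
          1 / (h ^ δ * (2 - δ)) * (dCoef δ (m + 1 - (i + 1)) *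
          (u ((i + 1 + 2 : ℕ) * h) - 2 * u ((i + 1 + 1 : ℕ) * h) + u ((i + 1 : ℕ) * h))))| ≤
        2 * C / (2 - δ) * (Z * (m:ℝ) ^ (1 - δ)) := by
      refine (Finset.abs_sum_le_sum_abs _ _).trans ?_
      refine (Finset.sum_le_sum fun i hi => (ek i (Finset.mem_range.1 hi)).2).trans ?_
      rw [← Finset.mul_sum]
      exact mul_le_mul_of_nonneg_left (hZs m hmpos) (by positivity)
    have hE0 : |(∫ t in (0:ℝ)..h, (X - t) ^ (1 - δ) * g t)| ≤ C / (δ - 1) * (m:ℝ) ^ (1 - δ) := by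
      refine e0.2.trans (le_of_eq ?_)
      rw [show X - h = m * h by rw [hXe]; ring, Real.mul_rpow hm0 hh.le]
      have q2 : h ^ (1 - δ) * h ^ (δ - 1) = 1 := by
        rw [← Real.rpow_add hh]; simp
      linear_combination (m:ℝ) ^ (1 - δ) * (C / (δ - 1)) * q2
    have hmm : ((m:ℝ) + 1) ^ (1 - δ) ≤ (m:ℝ) ^ (1 - δ) :=
      Real.rpow_le_rpow_of_nonpos (by linarith) (by linarith) (by linarith)
    have hF' := hF.trans (mul_le_mul_of_nonneg_left hmm hB0)
    refine (abs_add_le _ _).trans ?_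
    refine (add_le_add hS (abs_sub _ _)).trans ?_
    simp only [zero_add, Nat.cast_one, one_mul, Nat.cast_zero, zero_mul, Nat.cast_ofNat, Nat.sub_zero]
    have : 0 ≤ A * (m:ℝ) ^ (1 - δ) := by positivity
    linarith

lemma conv_err (δ : ℝ) (hδ1 : 1 < δ) (hδ2 : δ < 2) (C : ℝ) (hC : 0 ≤ C) (u v g : ℝ → ℝ)
    (hu : ContinuousOn u (Icc 0 1)) (hu' : ∀ x ∈ Ioo (0:ℝ) 1, HasDerivAt u (v x) x)
    (hv : ContinuousOn v (Icc 0 1)) (hv' : ∀ x ∈ Ioo (0:ℝ) 1, HasDerivAt v (g x) x)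
    (hgb : ∀ x ∈ Ioc (0:ℝ) 1, |g x| ≤ C * x ^ (δ - 2)) (h : ℝ) (m i : ℕ) (hh : 0 < h)
    (hm : ((m:ℝ) + 2) * h ≤ 1) (hi : i = m ∨ i = m + 1) :
    |(u ((i + 1 : ℕ) * h) - u (i * h)) / h - v ((m + 1 : ℕ) * h)| ≤
      (2 * C + C / (δ - 1)) * (if m = 0 then 1 else (m:ℝ) ^ (1 - δ)) := by
  have hm0 : (0:ℝ) ≤ m := m.cast_nonneg
  have hi1 : (m:ℝ) ≤ i := by rcases hi with rfl | rfl <;> push_cast <;> linarith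
  have hi2 : (i:ℝ) ≤ m + 1 := by rcases hi with rfl | rfl <;> push_cast <;> linarith
  have b1 : (m:ℝ) * h ≤ i * h := mul_le_mul_of_nonneg_right hi1 hh.le
  have b2 : (i:ℝ) * h ≤ (m + 1) * h := mul_le_mul_of_nonneg_right hi2 hh.le
  have b0 : 0 ≤ (m:ℝ) * h := by positivity
  have hK : 0 ≤ C / (δ - 1) := div_nonneg hC (by linarith)
  push_cast
  obtain ⟨ξ, hξ, e⟩ := mvt u v (i * h) ((i + 1) * h) (by nlinarith)
    (hu.mono fun z hz => ⟨by linarith [hz.1], by linarith [hz.2]⟩)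
    (fun z hz => hu' z ⟨by linarith [hz.1], by linarith [hz.2]⟩)
  have e2 : (u ((i + 1) * h) - u (i * h)) / h = v ξ := by
    rw [e]; field_simp; ring
  rw [e2]
  have hx1 : ξ ∈ Icc ((m:ℝ) * h) (m * h + 2 * h) := ⟨by linarith [hξ.1], by linarith [hξ.2]⟩
  have hx2 : ((m:ℝ) + 1) * h ∈ Icc ((m:ℝ) * h) (m * h + 2 * h) := ⟨by linarith, by linarith⟩
  rcases Nat.eq_zero_or_pos m with rfl | hmpos
  · rw [if_pos rfl]
    have gen : ∀ x y : ℝ, 0 ≤ x → x ≤ y → y ≤ 1 → |v y - v x| ≤ C / (δ - 1) := by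
      intro x y hx hxy hy
      refine (holder δ hδ1 C v g hv hv' hgb x y hx hxy hy).trans ?_
      have q1 : y ^ (δ - 1) ≤ 1 := Real.rpow_le_one (by linarith) hy (by linarith)
      have q2 : 0 ≤ x ^ (δ - 1) := Real.rpow_nonneg hx _
      have := mul_le_mul_of_nonneg_left (by linarith : y ^ (δ - 1) - x ^ (δ - 1) ≤ 1) hK
      linarith
    have : |v ξ - v (((0:ℕ) + 1) * h)| ≤ C / (δ - 1) := by
      rcases le_total ξ (((0:ℕ) + 1) * h) with hle | hle
      · rw [abs_sub_comm]; exact gen _ _ (by linarith [hx1.1]) hle (by linarith [hx2.2])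
      · exact gen _ _ (by linarith [hx2.1]) hle (by linarith [hx1.2])
    linarith
  · rw [if_neg hmpos.ne']
    have hm1 : (1:ℝ) ≤ m := by exact_mod_cast hmpos
    have l := lip C (δ - 2) hC (by linarith) v g (hv.mono Ioc_subset_Icc_self) hv' hgb (m * h) (2 * h)
      _ _ (by positivity) hx2 hx1 (by linarith)
    refine l.trans ?_
    have r1 : (m * h) ^ (δ - 2) * h = (m:ℝ) ^ (δ - 2) * h ^ (δ - 1) := by
      rw [Real.mul_rpow hm0 hh.le, mul_assoc, ← Real.rpow_add_one hh.ne']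
      congr 2; ring
    have r2 : (m:ℝ) ^ (δ - 2) ≤ 1 := Real.rpow_le_one_of_one_le_of_nonpos hm1 (by linarith)
    have r3 : h ^ (δ - 1) ≤ (m:ℝ) ^ (1 - δ) := by
      rw [show 1 - δ = -(δ - 1) by ring, Real.rpow_neg hm0, ← Real.inv_rpow hm0]
      apply Real.rpow_le_rpow hh.le _ (by linarith)
      rw [le_inv_comm₀ hh (by linarith), ← one_div, le_div_iff₀ hh]
      nlinarith
    have r4 : 0 ≤ h ^ (δ - 1) := Real.rpow_nonneg hh.le _
    have r5 : (m * h) ^ (δ - 2) * h ≤ (m:ℝ) ^ (1 - δ) := by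
      rw [r1]; nlinarith
    have r6 := mul_le_mul_of_nonneg_left r5 (by linarith : 0 ≤ 2 * C)
    have : 0 ≤ C / (δ - 1) * (m:ℝ) ^ (1 - δ) := by positivity
    linarith

theorem stmt17 (δ : ℝ) (hδ1 : 1 < δ) (hδ2 : δ < 2)
    (α₀ α₁ : ℝ) (hα₀ : 0 ≤ α₀) (hα₁ : 0 ≤ α₁)
    (b c : ℝ → ℝ) (hb : ContinuousOn b (Set.Icc 0 1)) (hc : ContinuousOn c (Set.Icc 0 1))
    (u : ℝ → ℝ) (hu1 : ContDiffOn ℝ 1 u (Set.Icc 0 1)) (hu3 : ContDiffOn ℝ 3 u (Set.Ioc 0 1))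
    (C₀ : ℝ)
    (hu2b : ∀ x ∈ Set.Ioc (0:ℝ) 1, |du (du u) x| ≤ C₀ * x ^ (δ - 2))
    (hu3b : ∀ x ∈ Set.Ioc (0:ℝ) 1, |du (du (du u)) x| ≤ C₀ * x ^ (δ - 3)) :
    ∃ C : ℝ, ∀ N : ℕ, 2 ≤ N →
      |trunc δ α₀ α₁ b c u N 0| ≤ C * ((1:ℝ) / N) ^ (δ - 1) ∧
      |trunc δ α₀ α₁ b c u N 1| ≤ C ∧
      (∀ j : ℕ, 2 ≤ j → j ≤ N - 1 →
        |trunc δ α₀ α₁ b c u N j| ≤ C * ((j:ℝ) - 1) ^ (1 - δ)) ∧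
      |trunc δ α₀ α₁ b c u N N| ≤ C * α₁ * ((1:ℝ) / N) := by
  
  have hC : 0 ≤ C₀ := by
    have := hu2b 1 (by simp)
    simp only [Real.one_rpow, mul_one] at this
    exact (abs_nonneg _).trans this
  obtain ⟨s1, d1⟩ := reg_step u 2 (by exact_mod_cast hu3)
  obtain ⟨s2, d2⟩ := reg_step (du u) 1 (by exact_mod_cast s1)
  obtain ⟨s3, d3⟩ := reg_step (du (du u)) 0 (by exact_mod_cast s2)
  have cu : ContinuousOn u (Icc 0 1) := hu1.continuousOn
  have cv : ContinuousOn (du u) (Icc 0 1) :=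
    hu1.continuousOn_derivWithin (uniqueDiffOn_Icc one_pos) le_rfl
  have cg : ContinuousOn (du (du u)) (Ioc 0 1) := s2.continuousOn
  obtain ⟨K, hK0, hK⟩ := caputo_err δ hδ1 hδ2 C₀ hC u (du u) (du (du u)) (du (du (du u)))
    cu d1 cv d2 cg d3 hu2b hu3b
  obtain ⟨M, hM⟩ := isCompact_Icc.exists_bound_of_continuousOn hb
  have hM0 : 0 ≤ M := (norm_nonneg _).trans (hM 0 (by simp))
  have hG : 0 < Real.Gamma (2 - δ) := Real.Gamma_pos_of_pos (by linarith)
  have hG3 : Real.Gamma (3 - δ) = (2 - δ) * Real.Gamma (2 - δ) := by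
    rw [← Real.Gamma_add_one (by linarith)]; congr 1; ring
  have hKh : 0 ≤ C₀ / (δ - 1) := div_nonneg hC (by linarith)
  set Q := 1 / Real.Gamma (2 - δ) * K + M * (2 * C₀ + C₀ / (δ - 1)) with hQ
  have hQ0 : 0 ≤ Q := by positivity
  have hR0 : 0 ≤ C₀ * (1/2) ^ (δ - 2) := by positivity
  have hA0 : 0 ≤ α₀ * (C₀ / (δ - 1)) := by positivity
  refine ⟨Q + α₀ * (C₀ / (δ - 1)) + C₀ * (1/2) ^ (δ - 2), ?_⟩
  intro N hN
  have hN2 : (2:ℝ) ≤ N := by exact_mod_cast hN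
  set h : ℝ := 1 / N with hh
  have hpos : 0 < h := by positivity
  have hNh : (N:ℝ) * h = 1 := by rw [hh]; field_simp
  have hhalf : h ≤ 1 / 2 := by nlinarith
  have mid : ∀ m : ℕ, m + 2 ≤ N → |trunc δ α₀ α₁ b c u N (m + 1)| ≤
      Q * (if m = 0 then 1 else (m:ℝ) ^ (1 - δ)) := by
    intro m hm
    have hmN : ((m:ℝ) + 2) ≤ N := by exact_mod_cast hm
    have hmh : ((m:ℝ) + 2) * h ≤ 1 := by rw [← hNh]; exact mul_le_mul_of_nonneg_right hmN hpos.le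
    have hm0 : (0:ℝ) ≤ m := m.cast_nonneg
    have k1 := hK h m hpos hmh
    have hconv : |(if b ((m + 1 : ℕ) * h) < 0 then (u ((m + 1 + 1 : ℕ) * h) - u ((m + 1 : ℕ) * h)) / h
          else (u ((m + 1 : ℕ) * h) - u ((m + 1 - 1 : ℕ) * h)) / h) - du u ((m + 1 : ℕ) * h)| ≤
        (2 * C₀ + C₀ / (δ - 1)) * (if m = 0 then 1 else (m:ℝ) ^ (1 - δ)) := by
      split_ifs with h1
      all_goals first
        | exact (conv_err δ hδ1 hδ2 C₀ hC u (du u) (du (du u)) cu d1 cv d2 hu2b h m (m+1) hpos hmh (Or.inr rfl)).trans_eq (by simp [*])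
        | exact (conv_err δ hδ1 hδ2 C₀ hC u (du u) (du (du u)) cu d1 cv d2 hu2b h m m hpos hmh (Or.inl rfl)).trans_eq (by simp [*])
    have hbb := hM ((m + 1 : ℕ) * h) ⟨by positivity, by push_cast; linarith⟩
    rw [Real.norm_eq_abs] at hbb
    have hmul := mul_le_mul hbb hconv (abs_nonneg _) hM0
    rw [← abs_mul] at hmul
    have k2 := mul_le_mul_of_nonneg_left k1 (by positivity : 0 ≤ 1 / Real.Gamma (2 - δ))
    rw [← abs_of_pos (by positivity : 0 < 1 / Real.Gamma (2 - δ)), ← abs_mul,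
      abs_of_pos (by positivity : 0 < 1 / Real.Gamma (2 - δ))] at k2
    have := add_le_add k2 hmul
    have := (abs_add_le _ _).trans this
    have hp : 0 < h ^ δ := Real.rpow_pos_of_pos hpos _
    have h2d : 0 < 2 - δ := by linarith
    have hrhs : 1 / Real.Gamma (2 - δ) * (K * (if m = 0 then 1 else (m:ℝ) ^ (1 - δ))) +
        M * ((2 * C₀ + C₀ / (δ - 1)) * (if m = 0 then 1 else (m:ℝ) ^ (1 - δ))) =
        Q * (if m = 0 then 1 else (m:ℝ) ^ (1 - δ)) := by rw [hQ]; ring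
    rw [hrhs] at this
    refine le_trans (le_of_eq ?_) this
    congr 1
    unfold trunc caputoW
    rw [if_neg (by omega), if_neg (by omega), ← hh, hG3, ← Finset.mul_sum]
    have hc1 : 1 / (h ^ δ * ((2 - δ) * Real.Gamma (2 - δ))) =
      1 / Real.Gamma (2 - δ) * (1 / (h ^ δ * (2 - δ))) := by field_simp
    rw [hc1]
    ring
  have end0 : |trunc δ α₀ α₁ b c u N 0| ≤ α₀ * (C₀ / (δ - 1)) * h ^ (δ - 1) := by
    unfold trunc
    rw [if_pos rfl, ← hh]
    simp only [Nat.cast_one, one_mul, Nat.cast_zero, zero_mul]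
    obtain ⟨ξ, hξ, e⟩ := mvt u (du u) 0 h hpos
      (cu.mono fun z hz => ⟨hz.1, by linarith [hz.2]⟩)
      (fun z hz => d1 z ⟨hz.1, by linarith [hz.2]⟩)
    have hol := holder δ hδ1 C₀ (du u) _ cv d2 hu2b 0 ξ le_rfl hξ.1.le (by linarith [hξ.2])
    rw [Real.zero_rpow (by linarith), sub_zero] at hol
    have mon : ξ ^ (δ - 1) ≤ h ^ (δ - 1) := Real.rpow_le_rpow hξ.1.le hξ.2.le (by linarith)
    have e2 : α₀ * du u 0 - α₀ / h * (u h - u 0) = α₀ * (du u 0 - du u ξ) := by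
      rw [e]; field_simp; ring
    rw [e2, abs_mul, abs_of_nonneg hα₀, abs_sub_comm, mul_assoc]
    apply mul_le_mul_of_nonneg_left _ hα₀
    exact hol.trans (mul_le_mul_of_nonneg_left mon hKh)
  have endN : |trunc δ α₀ α₁ b c u N N| ≤ C₀ * (1/2) ^ (δ - 2) * α₁ * h := by
    unfold trunc
    rw [if_neg (by omega), if_pos rfl, ← hh]
    have hx : ((N - 1 : ℕ) : ℝ) * h = 1 - h := by
      rw [Nat.cast_sub (by omega)]; push_cast; linarith
    simp only [hNh, hx]
    obtain ⟨ξ, hξ, e⟩ := mvt u (du u) (1 - h) 1 (by linarith)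
      (cu.mono fun z hz => ⟨by linarith [hz.1], hz.2⟩)
      (fun z hz => d1 z ⟨by linarith [hz.1], hz.2⟩)
    have l := lip C₀ (δ - 2) hC (by linarith) (du u) _ (cv.mono Ioc_subset_Icc_self) d2 hu2b (1 - h) h
      1 ξ (by linarith) ⟨by linarith, by linarith⟩ ⟨hξ.1.le, by linarith [hξ.2]⟩ (by linarith)
    have mon : (1 - h) ^ (δ - 2) ≤ (1/2) ^ (δ - 2) :=
      Real.rpow_le_rpow_of_nonpos (by norm_num) (by linarith) (by linarith)
    have e2 : -α₁ * du u 1 + α₁ / h * (u 1 - u (1 - h)) = α₁ * (du u ξ - du u 1) := by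
      rw [e]; field_simp; ring
    rw [e2, abs_mul, abs_of_nonneg hα₁]
    have l2 := l.trans (mul_le_mul_of_nonneg_right (mul_le_mul_of_nonneg_left mon hC) hpos.le)
    have := mul_le_mul_of_nonneg_left l2 hα₁
    linarith
  refine ⟨?_, ?_, ?_, ?_⟩
  · refine end0.trans (mul_le_mul_of_nonneg_right (by linarith) (Real.rpow_nonneg hpos.le _))
  · have := mid 0 (by omega)
    simp only [if_true, mul_one, zero_add] at this
    linarith
  · intro j hj1 hj2
    obtain ⟨m, rfl⟩ : ∃ m, j = m + 1 := ⟨j - 1, by omega⟩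
    have := mid m (by omega)
    rw [if_neg (by omega)] at this
    push_cast
    rw [add_sub_cancel_right]
    exact this.trans (mul_le_mul_of_nonneg_right (by linarith) (by positivity))
  · refine endN.trans ?_
    exact mul_le_mul_of_nonneg_right (mul_le_mul_of_nonneg_right (by linarith) hα₁) hpos.le
end

section
/- Let δ ∈ ℝ with 1 < δ < 2, let α₀ ≥ 1/(δ−1) and α₁ ≥ 0, let γ₀, γ₁ ∈ ℝ, and let b, c, f : [0,1] → ℝ be continuous with c(x) ≥ 0 for all x ∈ [0,1]. Let u : [0,1] → ℝ be continuously differentiable on [0,1] and three times continuously differentiable on (0,1], with |u''(x)| ≤ C₀ x^{δ−2} and |u'''(x)| ≤ C₀ x^{δ−3} for all 0 < x ≤ 1 and some constant C₀, and assume u satisfies −D*^δ u(x) + b(x) u'(x) + c(x) u(x) = f(x) for all x ∈ (0,1), u(0) − α₀ u'(0) = γ₀, and u(1) + α₁ u'(1) = γ₁. For each integer N ≥ 3 set h = 1/N, x_j = jh, let A be the (N+1)×(N+1) discretization matrix defined by (Av)₀ = (1 + α₀/h) v₀ − (α₀/h) v₁, (Av)_N = −(α₁/h) v_{N−1} + (1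 + α₁/h) v_N, and (Av)_j = −(1/(h^δ Γ(3−δ))) Σ_{k=0}^{j−1} d_{j−k}(v_{k+2} − 2v_{k+1} + v_k) + b(x_j) D^ℵ v_j + c(x_j) v_j for 1 ≤ j ≤ N−1, where d_r := (max(r,0))^{2−δ} − (max(r−1,0))^{2−δ} and D^ℵ v_j := (v_{j+1} − v_j)/h if b(x_j) < 0 and (v_j − v_{j−1})/h if b(x_j) ≥ 0, and let ū = (u₀, …, u_N) be the unique solution of A ū = (γ₀, f(x₁), …, f(x_{N−1}), γ₁)ᵀ. Then there exists a constant C, independent of N, such that max_{0 ≤ j ≤ N} |u(x_j) − u_j| ≤ C h^{δ−1}. -/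
lemma bern_neg (s a : ℝ) (hs : -1 < s) (ha0 : 0 ≤ a) (ha1 : a ≤ 1) :
    1 - a * s ≤ (1 + s) ^ (-a) := by
  have h1 := rpow_one_add_le_one_add_mul_self hs.le ha0 ha1
  have h2 : 0 < (1 + s) ^ a := Real.rpow_pos_of_pos (by linarith) _
  rw [Real.rpow_neg (by linarith)]
  rw [← one_div, le_div_iff₀ h2]
  by_cases h : 1 - a * s ≤ 0
  · nlinarith
  · push Not at h
    nlinarith [sq_nonneg (a * s)]

lemma dC_eq (δ : ℝ) (j : ℕ) (hj : 1 ≤ j) :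
    dCoef δ j = (j:ℝ) ^ (2 - δ) - ((j:ℝ) - 1) ^ (2 - δ) := by
  have h1 : (1:ℝ) ≤ j := by exact_mod_cast hj
  unfold dCoef
  rw [max_eq_left (by linarith), max_eq_left (by linarith)]

lemma dC_aux (δ : ℝ) (j : ℕ) (hj : 1 ≤ j) :
    dCoef δ j = (j:ℝ) ^ (1 - δ) * ((j:ℝ) * (1 - (1 + -(1/(j:ℝ))) ^ (2 - δ))) := by
  have h1 : (1:ℝ) ≤ j := by exact_mod_cast hj
  have h0 : (0:ℝ) < j := by linarith
  rw [dC_eq δ j hj]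
  have e1 : (j:ℝ) - 1 = j * (1 + -(1/(j:ℝ))) := by field_simp; ring
  have h2 : (0:ℝ) ≤ 1 + -(1/(j:ℝ)) := by
    have : 1/(j:ℝ) ≤ 1 := by rw [div_le_one h0]; exact h1
    linarith
  rw [e1, Real.mul_rpow h0.le h2]
  have e2 : (j:ℝ) ^ (2 - δ) = (j:ℝ) ^ (1 - δ) * j := by
    rw [← Real.rpow_add_one h0.ne']; congr 1; ring
  rw [e2]; ring

lemma dC_lower (δ : ℝ) (hδ1 : 1 < δ) (hδ2 : δ < 2) (j : ℕ) (hj : 1 ≤ j) :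
    (2 - δ) * (j:ℝ) ^ (1 - δ) ≤ dCoef δ j := by
  have h1 : (1:ℝ) ≤ j := by exact_mod_cast hj
  have h0 : (0:ℝ) < j := by linarith
  rw [dC_aux δ j hj, mul_comm]
  apply mul_le_mul_of_nonneg_left _ (by positivity)
  have hb := rpow_one_add_le_one_add_mul_self (s := -(1/(j:ℝ))) (p := 2 - δ)
    (by have : 1/(j:ℝ) ≤ 1 := by rw [div_le_one h0]; exact h1
        linarith) (by linarith) (by linarith)
  calc 2 - δ = j * ((2 - δ) * (1/(j:ℝ))) := by field_simp
    _ ≤ _ := by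
      apply mul_le_mul_of_nonneg_left _ h0.le
      linarith

lemma dC_upper (δ : ℝ) (hδ1 : 1 < δ) (hδ2 : δ < 2) (j : ℕ) (hj : 1 ≤ j) :
    dCoef δ j ≤ (j:ℝ) ^ (1 - δ) := by
  have h1 : (1:ℝ) ≤ j := by exact_mod_cast hj
  have h0 : (0:ℝ) < j := by linarith
  have h2 : (0:ℝ) ≤ 1 + -(1/(j:ℝ)) := by
    have : 1/(j:ℝ) ≤ 1 := by rw [div_le_one h0]; exact h1
    linarith
  have h3 : 1 + -(1/(j:ℝ)) ≤ 1 := by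
    have : 0 < 1/(j:ℝ) := by positivity
    linarith
  rw [dC_aux δ j hj]
  have hb : 1 + -(1/(j:ℝ)) ≤ (1 + -(1/(j:ℝ))) ^ (2 - δ) := by
    have := Real.rpow_le_rpow_of_exponent_ge' h2 h3 (by linarith : 0 ≤ 2 - δ) (by linarith : 2 - δ ≤ 1)
    simpa using this
  calc _ ≤ (j:ℝ) ^ (1 - δ) * 1 := by
        apply mul_le_mul_of_nonneg_left _ (by positivity)
        calc _ ≤ (j:ℝ) * (1/(j:ℝ)) := by
              apply mul_le_mul_of_nonneg_left _ h0.le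
              linarith
          _ = 1 := by field_simp
    _ = _ := by ring

lemma dC_ratio (δ : ℝ) (hδ1 : 1 < δ) (hδ2 : δ < 2) (i : ℕ) (hi : 2 ≤ i) :
    dCoef δ i * ((δ - 1) / i) ≤ dCoef δ (i - 1) - dCoef δ i := by
  have h1 : (2:ℝ) ≤ i := by exact_mod_cast hi
  have h0 : (0:ℝ) < i := by linarith
  rw [dC_eq δ i (by omega), dC_eq δ (i-1) (by omega)]
  have hc : ((i - 1 : ℕ) : ℝ) = (i:ℝ) - 1 := by push_cast [Nat.cast_sub (by omega : 1 ≤ i)]; rfl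
  rw [hc]
  set q : ℝ := 1 + (δ - 1) / i with hq
  have hm : MonotoneOn (fun t : ℝ => (t - 1) ^ (2 - δ) - q * t ^ (2 - δ)) (Set.Icc ((i:ℝ) - 1) i) := by
    apply monotoneOn_of_hasDerivWithinAt_nonneg (convex_Icc _ _)
      (f' := fun t => ((1 * (2 - δ) * (t - 1) ^ (2 - δ - 1)) - q * ((2 - δ) * t ^ (2 - δ - 1))))
    · apply ContinuousOn.sub
      · apply ContinuousOn.rpow_const (by fun_prop)
        intros; right; linarith
      · apply ContinuousOn.mul (by fun_prop)
        apply ContinuousOn.rpow_const (by fun_prop)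
        intros; right; linarith
    · intro t ht
      rw [interior_Icc] at ht
      apply HasDerivAt.hasDerivWithinAt
      apply HasDerivAt.sub
      · exact ((hasDerivAt_id t).sub_const 1).rpow_const (by left; simp only [id]; linarith [ht.1])
      · exact (Real.hasDerivAt_rpow_const (by left; linarith [ht.1])).const_mul q
    · intro t ht
      rw [interior_Icc] at ht
      have ht1 : 0 < t - 1 := by linarith [ht.1]
      have ht0 : 0 < t := by linarith
      have hs : t - 1 = t * (1 + -(1/t)) := by field_simp; ring
      have hs0 : 0 < 1 + -(1/t) := by
        by_contra hh
        push Not at hh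
        nlinarith
      have key : q ≤ (1 + -(1/t)) ^ (2 - δ - 1) := by
        have hb := bern_neg (-(1/t)) (δ - 1) (by linarith) (by linarith) (by linarith)
        have e : 2 - δ - 1 = -(δ - 1) := by ring
        rw [e]
        refine le_trans ?_ hb
        have : (δ - 1) / i ≤ (δ - 1) / t := by
          apply div_le_div_of_nonneg_left (by linarith) ht0 ht.2.le
        rw [hq]
        have e2 : (δ - 1) * -(1/t) = - ((δ - 1) / t) := by ring
        rw [e2]; linarith
      rw [hs, Real.mul_rpow ht0.le hs0.le]
      have hp : 0 ≤ (2 - δ) * t ^ (2 - δ - 1) := by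
        have : 0 ≤ t ^ (2 - δ - 1) := by positivity
        exact mul_nonneg (by linarith) this
      nlinarith
  have := hm (Set.left_mem_Icc.2 (by linarith)) (Set.right_mem_Icc.2 (by linarith)) (by linarith)
  simp only [hq] at this
  nlinarith

lemma dC_convex (δ : ℝ) (hδ1 : 1 < δ) (hδ2 : δ < 2) (r : ℕ) (hr : 2 ≤ r) :
    0 ≤ dCoef δ (r + 1) - 2 * dCoef δ r + dCoef δ (r - 1) := by
  have h1 : (2:ℝ) ≤ r := by exact_mod_cast hr
  rw [dC_eq δ r (by omega), dC_eq δ (r-1) (by omega), dC_eq δ (r+1) (by omega)]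
  have hc : ((r - 1 : ℕ) : ℝ) = (r:ℝ) - 1 := by push_cast [Nat.cast_sub (by omega : 1 ≤ r)]; rfl
  rw [hc]
  push_cast
  have hm : MonotoneOn (fun t : ℝ => (t + 1) ^ (2 - δ) - 2 * t ^ (2 - δ) + (t - 1) ^ (2 - δ))
      (Set.Icc ((r:ℝ) - 1) r) := by
    apply monotoneOn_of_hasDerivWithinAt_nonneg (convex_Icc _ _)
      (f' := fun t => (1 * (2 - δ) * (t + 1) ^ (2 - δ - 1)) - 2 * ((2 - δ) * t ^ (2 - δ - 1)) +
        (1 * (2 - δ) * (t - 1) ^ (2 - δ - 1)))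
    · apply ContinuousOn.add
      · apply ContinuousOn.sub
        · apply ContinuousOn.rpow_const (by fun_prop)
          intros; right; linarith
        · apply ContinuousOn.mul (by fun_prop)
          apply ContinuousOn.rpow_const (by fun_prop)
          intros; right; linarith
      · apply ContinuousOn.rpow_const (by fun_prop)
        intros; right; linarith
    · intro t ht
      rw [interior_Icc] at ht
      apply HasDerivAt.hasDerivWithinAt
      apply HasDerivAt.add
      · apply HasDerivAt.sub
        · exact ((hasDerivAt_id t).add_const 1).rpow_const (by left; simp only [id]; linarith [ht.1])
        · exact (Real.hasDerivAt_rpow_const (by left; linarith [ht.1])).const_mul 2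
      · exact ((hasDerivAt_id t).sub_const 1).rpow_const (by left; simp only [id]; linarith [ht.1])
    · intro t ht
      rw [interior_Icc] at ht
      have ht1 : 0 < t - 1 := by linarith [ht.1]
      have ht0 : 0 < t := by linarith
      have key : 2 * t ^ (2 - δ - 1) ≤ (t+1) ^ (2 - δ - 1) + (t-1) ^ (2 - δ - 1) := by
        have hi0 : 0 < 1/t := by positivity
        have hs : t - 1 = t * (1 + -(1/t)) := by field_simp; ring
        have hs' : t + 1 = t * (1 + 1/t) := by field_simp
        have hs0 : 0 < 1 + -(1/t) := by
          by_contra hh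
          push Not at hh
          nlinarith
        have hb := bern_neg (-(1/t)) (δ - 1) (by linarith) (by linarith) (by linarith)
        have hb' := bern_neg (1/t) (δ - 1) (by linarith) (by linarith) (by linarith)
        have e : 2 - δ - 1 = -(δ - 1) := by ring
        rw [e, hs, hs', Real.mul_rpow ht0.le hs0.le, Real.mul_rpow ht0.le (by linarith)]
        have hp : 0 ≤ t ^ (-(δ - 1)) := by positivity
        nlinarith
      nlinarith
  have := hm (Set.left_mem_Icc.2 (by linarith)) (Set.right_mem_Icc.2 (by linarith)) (by linarith)
  simp only [sub_add_cancel] at this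
  have e : (r:ℝ) + 1 - 1 = r := by ring
  rw [e]
  linarith

lemma sum_parts (e y : ℕ → ℝ) (n : ℕ) :
    ∑ k ∈ Finset.range (n + 2), e k * (y (k+2) - 2 * y (k+1) + y k) =
      e (n+1) * y (n+3) + (e n - 2 * e (n+1)) * y (n+2)
      + ∑ k ∈ Finset.range n, (e (k+2) - 2 * e (k+1) + e k) * y (k+2)
      + (e 1 - 2 * e 0) * y 1 + e 0 * y 0 := by
  induction n with
  | zero => simp [Finset.sum_range_succ]; ring
  | succ n ih =>
    rw [Finset.sum_range_succ, ih, Finset.sum_range_succ]; ring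

lemma dC_pos (δ : ℝ) (hδ1 : 1 < δ) (hδ2 : δ < 2) (j : ℕ) (hj : 1 ≤ j) : 0 < dCoef δ j := by
  refine lt_of_lt_of_le ?_ (dC_lower δ hδ1 hδ2 j hj)
  have h1 : (1:ℝ) ≤ j := by exact_mod_cast hj
  have : 0 < (j:ℝ) ^ (1 - δ) := by positivity
  exact mul_pos (by linarith) this

lemma dC_one (δ : ℝ) (hδ2 : δ < 2) : dCoef δ 1 = 1 := by
  rw [dC_eq δ 1 le_rfl]
  simp [Real.zero_rpow (by linarith : 2 - δ ≠ 0)]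

/-- The convolution sum is nonnegative at a negative minimum. -/
lemma S_nonneg (δ : ℝ) (hδ1 : 1 < δ) (hδ2 : δ < 2) (ρ : ℝ) (hρ0 : 0 ≤ ρ)
    (N : ℕ) (v : ℕ → ℝ) (i : ℕ) (hi1 : 1 ≤ i) (hi2 : i + 1 ≤ N) (hρ : ρ * i ≤ δ - 1)
    (hmin : ∀ k ≤ N, v i ≤ v k) (hneg : v i < 0) (h0 : v 1 - v 0 ≤ ρ * v 0) :
    0 ≤ ∑ k ∈ Finset.range i, dCoef δ (i - k) * (v (k+2) - 2 * v (k+1) + v k) := by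
  rcases Nat.lt_or_ge i 2 with h | h
  · have : i = 1 := by omega
    subst this
    simp [dC_one δ hδ2]
    have := hmin 2 hi2
    have := hmin 0 (by omega)
    linarith
  obtain ⟨n, rfl⟩ : ∃ n, i = n + 2 := ⟨i - 2, by omega⟩
  have key := sum_parts (fun k => dCoef δ (n + 2 - k)) (fun k => v k - v (n+2)) n
  have e1 : ∑ k ∈ Finset.range (n+2), dCoef δ (n + 2 - k) * (v (k+2) - 2 * v (k+1) + v k) =
      ∑ k ∈ Finset.range (n+2), dCoef δ (n + 2 - k) * ((v (k+2) - v (n+2)) - 2 * (v (k+1) - v (n+2)) + (v k - v (n+2))) := by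
    apply Finset.sum_congr rfl
    intro k _
    ring
  rw [e1]
  beta_reduce at key
  rw [key]
  have hsum : 0 ≤ ∑ k ∈ Finset.range n, (dCoef δ (n + 2 - (k + 2)) - 2 * dCoef δ (n + 2 - (k + 1)) + dCoef δ (n + 2 - k)) * (v (k+2) - v (n+2)) := by
    apply Finset.sum_nonneg
    intro k hk
    rw [Finset.mem_range] at hk
    apply mul_nonneg
    · have := dC_convex δ hδ1 hδ2 (n + 2 - (k+1)) (by omega)
      have a1 : n + 2 - (k+1) + 1 = n + 2 - k := by omega
      have a2 : n + 2 - (k+1) - 1 = n + 2 - (k + 2) := by omega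
      rw [a1, a2] at this
      linarith
    · linarith [hmin (k+2) (by omega)]
  have a1 : n + 2 - (n + 1) = 1 := by omega
  have a2 : n + 2 - 0 = n + 2 := by omega
  rw [a1, a2, dC_one δ hδ2]
  have hr := dC_ratio δ hδ1 hδ2 (n+2) (by omega)
  have hdp := dC_pos δ hδ1 hδ2 (n+2) (by omega)
  have hn : (0:ℝ) < ((n + 2 : ℕ):ℝ) := by positivity
  have hρ' : ρ ≤ (δ - 1) / ((n + 2 : ℕ):ℝ) := by rw [le_div_iff₀ hn]; exact hρ
  have hN := hmin (n+3) (by omega)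
  have hv1 := hmin 1 (by omega)
  have hv0 := hmin 0 (by omega)
  have hr2 : dCoef δ (n+2) * ρ ≤ dCoef δ (n + 2 - 1) - dCoef δ (n+2) :=
    le_trans (mul_le_mul_of_nonneg_left hρ' hdp.le) hr
  have hr3 : 0 ≤ dCoef δ (n + 2) * ρ := by positivity
  generalize dCoef δ (n + 2 - 1) = D1 at *
  generalize dCoef δ (n + 2) = D2 at *
  have main : 0 ≤ (D1 - D2) * (v 1 - v (n+2)) - D2 * (v 1 - v 0) := by
    by_cases hc : v 1 ≤ v 0
    · have : 0 ≤ (D1 - D2) * (v 1 - v (n+2)) := mul_nonneg (by linarith) (by linarith)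
      nlinarith
    · push Not at hc
      have hρp : 0 ≤ ρ * v 0 := by linarith
      have hv0p : ρ * v 0 ≤ ρ * v 1 := by nlinarith
      have h1 : D2 * (v 1 - v 0) ≤ D2 * (ρ * v 1) := mul_le_mul_of_nonneg_left (by linarith) hdp.le
      have h2 : (D2 * ρ) * (v 1 - v (n+2)) ≤ (D1 - D2) * (v 1 - v (n+2)) :=
        mul_le_mul_of_nonneg_right hr2 (by linarith)
      nlinarith
  nlinarith

lemma comparison (δ : ℝ) (hδ1 : 1 < δ) (hδ2 : δ < 2) (a0 a1 κ : ℝ) (ha1 : 0 ≤ a1)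
    (ha0 : 0 < a0) (hκ : 0 < κ) (N : ℕ) (ha : (N:ℝ) ≤ a0 * (δ - 1))
    (bb cc : ℕ → ℝ) (hN : 1 ≤ N)
    (hcc : ∀ j, j ≤ N → 0 ≤ cc j) (v : ℕ → ℝ)
    (h0 : 0 ≤ (1 + a0) * v 0 - a0 * v 1)
    (hj : ∀ j, 1 ≤ j → j ≤ N - 1 → 0 < -κ * (∑ k ∈ Finset.range j, dCoef δ (j - k) *
              (v (k + 2) - 2 * v (k + 1) + v k)) + bb j *
              (if bb j < 0 then (v (j + 1) - v j) / ((1:ℝ) / N)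
                else (v j - v (j - 1)) / ((1:ℝ) / N)) + cc j * v j)
    (h1 : 0 ≤ -a1 * v (N-1) + (1 + a1) * v N) : ∀ j, j ≤ N → 0 ≤ v j := by
  obtain ⟨i, hi, hmin⟩ := Finset.exists_min_image (Finset.range (N+1)) v ⟨0, by simp⟩
  have hiN : i ≤ N := by simpa [Nat.lt_succ_iff] using hi
  have hmin' : ∀ k ≤ N, v i ≤ v k := fun k hk => hmin k (by simp; omega)
  suffices 0 ≤ v i from fun j hj => this.trans (hmin' j hj)
  by_contra hneg
  push Not at hneg
  rcases Nat.eq_zero_or_pos i with rfl | hip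
  · have := hmin' 1 hN
    nlinarith
  rcases Nat.lt_or_ge i N with hlt | hge
  swap
  · have : i = N := le_antisymm hiN hge
    subst this
    have := hmin' (i-1) (by omega)
    nlinarith
  have hS := S_nonneg δ hδ1 hδ2 (1/a0) (by positivity) N v i hip hlt
    (by
      have : (i:ℝ) ≤ N := by exact_mod_cast hiN
      rw [one_div, inv_mul_le_iff₀ ha0]; linarith) hmin' hneg
    (by
      rw [one_div, le_inv_mul_iff₀ ha0]; linarith)
  have hrow := hj i hip (by omega)
  have hNp : (0:ℝ) < 1 / N := by
    have : (0:ℝ) < N := by exact_mod_cast hN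
    positivity
  have hbt : bb i * (if bb i < 0 then (v (i + 1) - v i) / ((1:ℝ) / N)
                else (v i - v (i - 1)) / ((1:ℝ) / N)) ≤ 0 := by
    split_ifs with hb
    · exact mul_nonpos_of_nonpos_of_nonneg hb.le (div_nonneg (by linarith [hmin' (i+1) hlt]) hNp.le)
    · exact mul_nonpos_of_nonneg_of_nonpos (not_lt.1 hb)
        (div_nonpos_of_nonpos_of_nonneg (by linarith [hmin' (i-1) (by omega)]) hNp.le)
  have hct : cc i * v i ≤ 0 := mul_nonpos_of_nonneg_of_nonpos (hcc i hiN) hneg.le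
  nlinarith [mul_nonneg hκ.le hS]

noncomputable def rowOp (δ κ : ℝ) (N : ℕ) (bb cc v : ℕ → ℝ) (j : ℕ) : ℝ :=
  -κ * (∑ k ∈ Finset.range j, dCoef δ (j - k) *
              (v (k + 2) - 2 * v (k + 1) + v k)) + bb j *
              (if bb j < 0 then (v (j + 1) - v j) / ((1:ℝ) / N)
                else (v j - v (j - 1)) / ((1:ℝ) / N)) + cc j * v j

lemma rowOp_lin (δ κ : ℝ) (N : ℕ) (bb cc v w : ℕ → ℝ) (s : ℝ) (j : ℕ) :
    rowOp δ κ N bb cc (fun k => v k + s * w k) j =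
      rowOp δ κ N bb cc v j + s * rowOp δ κ N bb cc w j := by
  unfold rowOp
  have : ∑ k ∈ Finset.range j, dCoef δ (j - k) *
      (v (k + 2) + s * w (k+2) - 2 * (v (k + 1) + s * w (k+1)) + (v k + s * w k)) =
      ∑ k ∈ Finset.range j, dCoef δ (j - k) * (v (k + 2) - 2 * v (k + 1) + v k) +
      s * ∑ k ∈ Finset.range j, dCoef δ (j - k) * (w (k + 2) - 2 * w (k + 1) + w k) := by
    rw [Finset.mul_sum, ← Finset.sum_add_distrib]
    apply Finset.sum_congr rfl
    intros; ring
  rw [this]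
  split_ifs <;> ring

lemma stab (δ : ℝ) (hδ1 : 1 < δ) (hδ2 : δ < 2) (α₀ α₁ T : ℝ) (hα₀ : 1 / (δ - 1) ≤ α₀)
    (hα₁ : 0 ≤ α₁) (hT : 0 ≤ T) : ∃ C : ℝ, ∀ N : ℕ, 3 ≤ N → ∀ bb cc e : ℕ → ℝ,
    (∀ j, j ≤ N → 0 ≤ cc j) →
    |(1 + α₀ / ((1:ℝ) / N)) * e 0 - (α₀ / ((1:ℝ) / N)) * e 1| ≤ T * ((1:ℝ) / N) ^ (δ - 1) →
    (∀ j : ℕ, 1 ≤ j → j ≤ N - 1 →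
      |rowOp δ (1 / (((1:ℝ) / N) ^ δ * Real.Gamma (3 - δ))) N bb cc e j| ≤ T * (j:ℝ) ^ (1 - δ)) →
    |-(α₁ / ((1:ℝ) / N)) * e (N - 1) + (1 + α₁ / ((1:ℝ) / N)) * e N| ≤ T * ((1:ℝ) / N) ^ (δ - 1) →
    ∀ j : ℕ, j ≤ N → |e j| ≤ C * ((1:ℝ) / N) ^ (δ - 1) := by
  have hG : 0 < Real.Gamma (3 - δ) := Real.Gamma_pos_of_pos (by linarith)
  have hα0 : 0 < α₀ := lt_of_lt_of_le (by apply div_pos one_pos; linarith) hα₀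
  set K := (T + 1) * Real.Gamma (3 - δ) / (2 - δ) with hK
  have hK0 : 0 < K := by
    apply div_pos _ (by linarith)
    positivity
  refine ⟨K * (1 + α₀) + T, ?_⟩
  intro N hN bb cc e hcc h0 hj h1
  have hNp : (0:ℝ) < N := by exact_mod_cast (by omega : 0 < N)
  have hN1 : (1:ℝ) ≤ N := by exact_mod_cast (by omega : 1 ≤ N)
  set h : ℝ := (1:ℝ) / N with hh
  have hhp : 0 < h := by positivity
  have hh1 : h ≤ 1 := by rw [hh, div_le_one hNp]; exact hN1
  set H := h ^ (δ - 1) with hH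
  have hHp : 0 < H := by positivity
  set M := (K * (1 + α₀) + T) * H with hM
  have hM0 : 0 ≤ M := by positivity
  set κ := 1 / (h ^ δ * Real.Gamma (3 - δ)) with hκ
  have hκ0 : 0 < κ := by positivity
  set φ : ℕ → ℝ := fun k => if k = 0 then M - K * H * h else M with hφ
  have φ0 : φ 0 = M - K * H * h := by simp [hφ]
  have φs : ∀ k, 1 ≤ k → φ k = M := fun k hk => by simp [hφ]; omega
  have hKH : K * H * h ≤ K * H := by
    have : 0 ≤ K * H := by positivity
    nlinarith
  have φn : ∀ k, 0 ≤ φ k := by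
    intro k
    rcases Nat.eq_zero_or_pos k with rfl | hk
    · rw [φ0, hM]
      have : 0 ≤ K * α₀ * H := by positivity
      have : 0 ≤ T * H := by positivity
      nlinarith
    · rw [φs k hk]; exact hM0
  have φrow : ∀ j : ℕ, 1 ≤ j → j ≤ N - 1 → (T + 1) * (j:ℝ) ^ (1 - δ) ≤ rowOp δ κ N bb cc φ j := by
    intro j hj1 hj2
    unfold rowOp
    have hs : ∑ k ∈ Finset.range j, dCoef δ (j - k) * (φ (k + 2) - 2 * φ (k + 1) + φ k) =
        dCoef δ j * (- (K * H * h)) := by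
      rw [Finset.sum_eq_single_of_mem 0 (by simp; omega)]
      · rw [φ0, φs _ (by omega), φs _ (by omega)]; rw [Nat.sub_zero]; ring
      · intro k _ hk
        rw [φs _ (by omega), φs _ (by omega), φs k (by omega)]; ring
    rw [hs, ← hh]
    have hb : 0 ≤ bb j * (if bb j < 0 then (φ (j + 1) - φ j) / h
                else (φ j - φ (j - 1)) / h) := by
      split_ifs with hb
      · rw [φs _ (by omega), φs _ hj1]; simp
      · apply mul_nonneg (not_lt.1 hb)
        apply div_nonneg _ hhp.le
        rw [φs j hj1]
        rcases Nat.eq_zero_or_pos (j-1) with hj0 | hj0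
        · rw [hj0, φ0]
          have : 0 ≤ K * H * h := by positivity
          linarith
        · rw [φs _ hj0]; simp
    have hc := mul_nonneg (hcc j (by omega)) (φn j)
    have hmain : (T + 1) * (j:ℝ) ^ (1 - δ) ≤ -κ * (dCoef δ j * (- (K * H * h))) := by
      have hHh : H * h = h ^ δ := by
        rw [hH, ← Real.rpow_add_one hhp.ne']; congr 1; ring
      have : -κ * (dCoef δ j * (- (K * H * h))) = dCoef δ j * ((T + 1) / (2 - δ)) := by
        have h2 : 2 - δ ≠ 0 := by linarith
        have h3 : h ^ δ ≠ 0 := by positivity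
        calc _ = κ * dCoef δ j * K * (H * h) := by ring
          _ = _ := by rw [hHh, hκ, hK]; field_simp
      rw [this]
      have hl := dC_lower δ hδ1 hδ2 j hj1
      calc (T + 1) * (j:ℝ) ^ (1 - δ) = ((2 - δ) * (j:ℝ) ^ (1 - δ)) * ((T + 1) / (2 - δ)) := by
            have h2 : 2 - δ ≠ 0 := by linarith
            field_simp
        _ ≤ _ := by
          apply mul_le_mul_of_nonneg_right hl
          apply div_nonneg (by linarith) (by linarith)
    linarith
  have φr0 : T * H ≤ (1 + α₀ / h) * φ 0 - (α₀ / h) * φ 1 := by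
    rw [φ0, φs 1 le_rfl]
    have : (1 + α₀ / h) * (M - K * H * h) - (α₀ / h) * M = M - K * H * h - α₀ * (K * H) := by
      field_simp; ring
    rw [this, hM]; nlinarith
  have φrN : T * H ≤ -(α₁ / h) * φ (N-1) + (1 + α₁ / h) * φ N := by
    rw [φs _ (by omega), φs _ (by omega)]
    have : -(α₁ / h) * M + (1 + α₁ / h) * M = M := by ring
    rw [this, hM]
    have : 0 ≤ K * (1 + α₀) * H := by positivity
    linarith
  have main : ∀ s : ℝ, |s| = 1 → ∀ j, j ≤ N → 0 ≤ φ j + s * e j := by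
    intro s hs
    have habs : ∀ x y : ℝ, |x| ≤ y → 0 ≤ y + s * x := by
      intro x y hx
      have : |s * x| ≤ y := by rw [abs_mul, hs, one_mul]; exact hx
      linarith [(abs_le.1 this).1]
    apply comparison δ hδ1 hδ2 (α₀ / h) (α₁ / h) κ (by positivity) (by positivity) hκ0 N _ bb cc
      (by omega) hcc
    · have := habs _ _ h0
      linarith
    · intro j hj1 hj2
      have h3 := rowOp_lin δ κ N bb cc φ e s j
      have h4 := habs _ _ (hj j hj1 hj2)
      have h5 := φrow j hj1 hj2
      have h6 : 0 < (j:ℝ) ^ (1 - δ) := by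
        have : (0:ℝ) < j := by exact_mod_cast hj1
        positivity
      have h7 : 0 < rowOp δ κ N bb cc (fun k => φ k + s * e k) j := by
        rw [h3]; linarith
      exact h7
    · have := habs _ _ h1
      linarith
    · rw [div_le_iff₀ (by linarith)] at hα₀
      rw [hh, div_div_eq_mul_div, div_one]
      nlinarith
  intro j hjN
  have p1 := main 1 (by simp) j hjN
  have p2 := main (-1) (by simp) j hjN
  have p3 : φ j ≤ M := by
    rcases Nat.eq_zero_or_pos j with rfl | hk
    · rw [φ0]
      have : 0 ≤ K * H * h := by positivity
      linarith
    · rw [φs j hk]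
  rw [abs_le]; constructor <;> linarith

lemma half_pow1 (δ : ℝ) (_hδ1 : 1 < δ) (hδ2 : δ < 2) (x : ℝ) (hx : 0 < x) :
    (x / 2) ^ (1 - δ) ≤ 2 * x ^ (1 - δ) := by
  rw [Real.div_rpow hx.le (by norm_num), div_eq_mul_inv, ← Real.rpow_neg (by norm_num), mul_comm]
  apply mul_le_mul_of_nonneg_right _ (by positivity)
  calc (2:ℝ) ^ (-(1 - δ)) ≤ 2 ^ (1:ℝ) := Real.rpow_le_rpow_of_exponent_le (by norm_num) (by linarith)
    _ = 2 := by norm_num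

lemma half_pow2 (δ : ℝ) (hδ1 : 1 < δ) (hδ2 : δ < 2) (x : ℝ) (hx : 0 < x) :
    (x / 2) ^ (δ - 2) ≤ 2 * x ^ (δ - 2) := by
  rw [Real.div_rpow hx.le (by norm_num), div_eq_mul_inv, ← Real.rpow_neg (by norm_num), mul_comm]
  apply mul_le_mul_of_nonneg_right _ (by positivity)
  calc (2:ℝ) ^ (-(δ - 2)) ≤ 2 ^ (1:ℝ) := Real.rpow_le_rpow_of_exponent_le (by norm_num) (by linarith)
    _ = 2 := by norm_num

lemma half_pow3 (δ : ℝ) (hδ1 : 1 < δ) (hδ2 : δ < 2) (x : ℝ) (hx : 0 < x) :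
    (x / 2) ^ (δ - 3) ≤ 4 * x ^ (δ - 3) := by
  rw [Real.div_rpow hx.le (by norm_num), div_eq_mul_inv, ← Real.rpow_neg (by norm_num), mul_comm]
  apply mul_le_mul_of_nonneg_right _ (by positivity)
  calc (2:ℝ) ^ (-(δ - 3)) ≤ 2 ^ (2:ℝ) := Real.rpow_le_rpow_of_exponent_le (by norm_num) (by linarith)
    _ = 4 := by norm_num

lemma sum_d (δ : ℝ) (hδ2 : δ < 2) (j : ℕ) :
    ∑ k ∈ Finset.range j, dCoef δ (j - k) = (j:ℝ) ^ (2 - δ) := by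
  have h1 : ∑ k ∈ Finset.range j, dCoef δ (j - k) = ∑ k ∈ Finset.range j, dCoef δ (k + 1) := by
    rw [← Finset.sum_range_reflect]
    apply Finset.sum_congr rfl
    intro k hk
    rw [Finset.mem_range] at hk
    congr 1; omega
  rw [h1]
  induction j with
  | zero => simp [Real.zero_rpow (by linarith : 2 - δ ≠ 0)]
  | succ n ih =>
    rw [Finset.sum_range_succ, ih, dC_eq δ (n+1) (by omega)]
    · push_cast; simp
    · rw [← Finset.sum_range_reflect]
      apply Finset.sum_congr rfl
      intro k hk
      rw [Finset.mem_range] at hk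
      congr 1; omega

lemma conv_bound (δ : ℝ) (hδ1 : 1 < δ) (hδ2 : δ < 2) : ∃ Z : ℝ, 0 ≤ Z ∧ ∀ j : ℕ, 1 ≤ j →
    ∑ k ∈ Finset.range j, (k:ℝ) ^ (δ - 3) * dCoef δ (j - k) ≤ Z * (j:ℝ) ^ (1 - δ) := by
  have hsum : Summable (fun n : ℕ => (n:ℝ) ^ (δ - 3)) := Real.summable_nat_rpow.2 (by linarith)
  set Z := ∑' n : ℕ, (n:ℝ) ^ (δ - 3) with hZ
  have hZ0 : 0 ≤ Z := tsum_nonneg (fun n => by positivity)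
  refine ⟨2 * Z + 4, by positivity, ?_⟩
  intro j hj
  have hj1 : (1:ℝ) ≤ j := by exact_mod_cast hj
  have hj0 : (0:ℝ) < j := by linarith
  have hpt : ∀ k ∈ Finset.range j, (k:ℝ) ^ (δ - 3) * dCoef δ (j - k) ≤
      ((j:ℝ)/2) ^ (1 - δ) * (k:ℝ) ^ (δ - 3) + ((j:ℝ)/2) ^ (δ - 3) * dCoef δ (j - k) := by
    intro k hk
    rw [Finset.mem_range] at hk
    have hd := dC_pos δ hδ1 hδ2 (j - k) (by omega)
    have hu := dC_upper δ hδ1 hδ2 (j - k) (by omega)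
    have hk0 : 0 ≤ (k:ℝ) ^ (δ - 3) := by positivity
    have hA : 0 ≤ ((j:ℝ)/2) ^ (1 - δ) * (k:ℝ) ^ (δ - 3) := by positivity
    have hB : 0 ≤ ((j:ℝ)/2) ^ (δ - 3) * dCoef δ (j - k) := by positivity
    rcases le_or_gt (k:ℝ) ((j:ℝ)/2) with h | h
    · have hc : ((j - k : ℕ):ℝ) = (j:ℝ) - k := by rw [Nat.cast_sub hk.le]
      have : ((j - k : ℕ):ℝ) ^ (1 - δ) ≤ ((j:ℝ)/2) ^ (1 - δ) := by
        rw [hc]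
        apply Real.rpow_le_rpow_of_nonpos (by positivity) (by linarith) (by linarith)
      nlinarith
    · have : (k:ℝ) ^ (δ - 3) ≤ ((j:ℝ)/2) ^ (δ - 3) := by
        apply Real.rpow_le_rpow_of_nonpos (by positivity) h.le (by linarith)
      nlinarith
  refine (Finset.sum_le_sum hpt).trans ?_
  rw [Finset.sum_add_distrib, ← Finset.mul_sum, ← Finset.mul_sum, sum_d δ hδ2]
  have h1 : ∑ k ∈ Finset.range j, (k:ℝ) ^ (δ - 3) ≤ Z :=
    hsum.sum_le_tsum _ (fun n _ => by positivity)
  have h2 := half_pow1 δ hδ1 hδ2 j hj0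
  have h3 := half_pow3 δ hδ1 hδ2 j hj0
  have h4 : (j:ℝ) ^ (δ - 3) * (j:ℝ) ^ (2 - δ) ≤ (j:ℝ) ^ (1 - δ) := by
    rw [← Real.rpow_add hj0]
    apply Real.rpow_le_rpow_of_exponent_le hj1; linarith
  have h5 : ((j:ℝ)/2) ^ (1 - δ) * ∑ k ∈ Finset.range j, (k:ℝ) ^ (δ - 3) ≤ 2 * (j:ℝ) ^ (1 - δ) * Z := by
    apply mul_le_mul h2 h1 (Finset.sum_nonneg (fun n _ => by positivity)) (by positivity)
  have h6 : ((j:ℝ)/2) ^ (δ - 3) * (j:ℝ) ^ (2 - δ) ≤ 4 * (j:ℝ) ^ (δ - 3) * (j:ℝ) ^ (2 - δ) :=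
    mul_le_mul_of_nonneg_right h3 (by positivity)
  nlinarith

lemma int_ker (δ : ℝ) (hδ2 : δ < 2) (x a b : ℝ) :
    ∫ t in a..b, (x - t) ^ (1 - δ) = ((x - a) ^ (2 - δ) - (x - b) ^ (2 - δ)) / (2 - δ) := by
  rw [intervalIntegral.integral_comp_sub_left (fun s => s ^ (1 - δ)), integral_rpow (by left; linarith)]
  have : 1 - δ + 1 = 2 - δ := by ring
  rw [this]

lemma ii_ker (δ : ℝ) (hδ2 : δ < 2) (x a b : ℝ) :
    IntervalIntegrable (fun t => (x - t) ^ (1 - δ)) MeasureTheory.volume a b := by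
  have : IntervalIntegrable (fun s : ℝ => s ^ (1 - δ)) MeasureTheory.volume (x - a) (x - b) :=
    intervalIntegral.intervalIntegrable_rpow' (by linarith)
  have := this.comp_sub_left x
  simpa using this

lemma trunc_s18 (δ : ℝ) (hδ1 : 1 < δ) (hδ2 : δ < 2) (C₀ C1 C2 : ℝ) (hC0 : 0 ≤ C₀) (hC1 : 0 ≤ C1)
    (hC2 : 0 ≤ C2) : ∃ T : ℝ, 0 ≤ T ∧ ∀ (h : ℝ) (j : ℕ) (q : ℝ → ℝ) (Q : ℕ → ℝ), 0 < h → 1 ≤ j →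
    j * h ≤ 1 → ContinuousOn q (Set.Ioc 0 1) →
    (∀ t ∈ Set.Ioc (0:ℝ) 1, |q t| ≤ C₀ * t ^ (δ - 2)) → |Q 0| ≤ C1 * h ^ (δ - 2) →
    (∀ k : ℕ, 1 ≤ k → k < j → ∀ t ∈ Set.Ioo (k * h) ((k + 1 : ℕ) * h),
      |q t - Q k| ≤ C2 * (h ^ (δ - 2) * (k:ℝ) ^ (δ - 3))) →
    |(∫ t in (0:ℝ)..(j * h), (j * h - t) ^ (1 - δ) * q t) -
      h ^ (2 - δ) / (2 - δ) * ∑ k ∈ Finset.range j, dCoef δ (j - k) * Q k| ≤ T * (j:ℝ) ^ (1 - δ) := by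
  obtain ⟨Z, hZ0, hZ⟩ := conv_bound δ hδ1 hδ2
  have hδ2' : 0 < 2 - δ := by linarith
  have hδ1' : 0 < δ - 1 := by linarith
  refine ⟨C₀ * (2 / (δ - 1)) + (2 * C₀ + C1) / (2 - δ) + C2 / (2 - δ) * Z, by positivity, ?_⟩
  intro h j q Q hh hj hjh hq hqb hQ0 hQ
  have hj1 : (1:ℝ) ≤ j := by exact_mod_cast hj
  have hj0 : (0:ℝ) < j := by linarith
  set x : ℝ := j * h with hx
  have hx0 : 0 < x := by positivity
  have hhx : h ≤ x := by rw [hx]; nlinarith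
  have hpt : ∀ t ∈ Set.Ioo 0 x, (x - t) ^ (1 - δ) * t ^ (δ - 2) ≤
      (x / 2) ^ (1 - δ) * t ^ (δ - 2) + (h / 2) ^ (δ - 2) * (x - t) ^ (1 - δ) := by
    intro t ht
    have ht0 := ht.1
    have htx : 0 < x - t := by linarith [ht.2]
    have hA : 0 ≤ (x / 2) ^ (1 - δ) * t ^ (δ - 2) := by positivity
    have hB : 0 ≤ (h / 2) ^ (δ - 2) * (x - t) ^ (1 - δ) := by positivity
    have hA' : 0 ≤ t ^ (δ - 2) := by positivity
    have hB' : 0 ≤ (x - t) ^ (1 - δ) := by positivity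
    rcases le_or_gt t (x/2) with h1 | h1
    · have : (x - t) ^ (1 - δ) ≤ (x/2) ^ (1 - δ) := by
        apply Real.rpow_le_rpow_of_nonpos (by positivity) (by linarith) (by linarith)
      nlinarith
    · have : t ^ (δ - 2) ≤ (h/2) ^ (δ - 2) := by
        apply Real.rpow_le_rpow_of_nonpos (by positivity) (by linarith) (by linarith)
      nlinarith
  set dom : ℝ → ℝ := fun t => C₀ * ((x / 2) ^ (1 - δ) * t ^ (δ - 2) + (h / 2) ^ (δ - 2) * (x - t) ^ (1 - δ)) with hdom
  have hdomi : ∀ a b, IntervalIntegrable dom MeasureTheory.volume a b := by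
    intro a b
    apply IntervalIntegrable.const_mul
    apply IntervalIntegrable.add
    · exact (intervalIntegral.intervalIntegrable_rpow' (by linarith)).const_mul _
    · exact (ii_ker δ hδ2 x a b).const_mul _
  have hptq : ∀ t ∈ Set.Ioo 0 x, |(x - t) ^ (1 - δ) * q t| ≤ dom t := by
    intro t ht
    have hB' : 0 ≤ (x - t) ^ (1 - δ) := by
      have : 0 < x - t := by linarith [ht.2]
      positivity
    rw [abs_mul, abs_of_nonneg hB']
    have := hqb t ⟨ht.1, by linarith [ht.2]⟩
    calc _ ≤ (x - t) ^ (1 - δ) * (C₀ * t ^ (δ - 2)) := mul_le_mul_of_nonneg_left this hB'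
      _ = C₀ * ((x - t) ^ (1 - δ) * t ^ (δ - 2)) := by ring
      _ ≤ _ := mul_le_mul_of_nonneg_left (hpt t ht) hC0
  have hint : IntervalIntegrable (fun t => (x - t) ^ (1 - δ) * q t) MeasureTheory.volume 0 x := by
    rw [intervalIntegrable_iff_integrableOn_Ioo_of_le hx0.le]
    have hd := (intervalIntegrable_iff_integrableOn_Ioo_of_le hx0.le).1 (hdomi 0 x)
    refine MeasureTheory.Integrable.mono' hd ?_ ?_
    · apply ContinuousOn.aestronglyMeasurable _ measurableSet_Ioo
      apply ContinuousOn.mul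
      · apply ContinuousOn.rpow_const (by fun_prop)
        intro t ht; left; linarith [ht.2]
      · exact hq.mono (fun t ht => ⟨ht.1, by linarith [ht.2]⟩)
    · rw [MeasureTheory.ae_restrict_iff' measurableSet_Ioo]
      exact Filter.Eventually.of_forall hptq
  have hsub : ∀ k < j, Set.Ioo ((k:ℝ) * h) ((k + 1 : ℕ) * h) ⊆ Set.Ioo 0 x := by
    intro k hk t ht
    have h1 : ((k + 1 : ℕ):ℝ) ≤ j := by exact_mod_cast hk
    refine ⟨lt_of_le_of_lt (by positivity) ht.1, lt_of_lt_of_le ht.2 ?_⟩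
    exact mul_le_mul_of_nonneg_right h1 hh.le
  have hle : ∀ k : ℕ, (k:ℝ) * h ≤ (k + 1 : ℕ) * h := by
    intro k; push_cast; nlinarith
  have hintk : ∀ k < j, IntervalIntegrable (fun t => (x - t) ^ (1 - δ) * q t) MeasureTheory.volume ((k:ℝ) * h) ((k + 1 : ℕ) * h) := by
    intro k hk
    rw [intervalIntegrable_iff_integrableOn_Ioo_of_le (hle k)]
    exact ((intervalIntegrable_iff_integrableOn_Ioo_of_le hx0.le).1 hint).mono_set (hsub k hk)
  have hI : ∀ k < j, ∫ t in ((k:ℝ) * h)..((k + 1 : ℕ) * h), (x - t) ^ (1 - δ) =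
      h ^ (2 - δ) / (2 - δ) * dCoef δ (j - k) := by
    intro k hk
    have hk' : ((k + 1 : ℕ):ℝ) ≤ j := by exact_mod_cast hk
    push_cast at hk'
    rw [int_ker δ hδ2, dC_eq δ (j - k) (by omega), Nat.cast_sub hk.le]
    have e1 : x - k * h = (j - k) * h := by rw [hx]; ring
    have e2 : x - ((k + 1 : ℕ):ℝ) * h = (j - k - 1) * h := by rw [hx]; push_cast; ring
    rw [e1, e2, Real.mul_rpow (by linarith) hh.le, Real.mul_rpow (by linarith) hh.le]
    ring
  have hsplit : (∫ t in (0:ℝ)..x, (x - t) ^ (1 - δ) * q t) =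
      ∑ k ∈ Finset.range j, ∫ t in ((k:ℝ) * h)..((k + 1 : ℕ) * h), (x - t) ^ (1 - δ) * q t := by
    have := intervalIntegral.sum_integral_adjacent_intervals (a := fun k : ℕ => (k:ℝ) * h) (n := j) hintk
    rw [this]; simp [hx]
  rw [hsplit, Finset.mul_sum, ← Finset.sum_sub_distrib]
  refine (Finset.abs_sum_le_sum_abs _ _).trans ?_
  have hterm : ∀ k ∈ Finset.range j,
      |(∫ t in ((k:ℝ) * h)..((k + 1 : ℕ) * h), (x - t) ^ (1 - δ) * q t) -
        h ^ (2 - δ) / (2 - δ) * (dCoef δ (j - k) * Q k)| ≤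
      C2 / (2 - δ) * ((k:ℝ) ^ (δ - 3) * dCoef δ (j - k)) +
      (if k = 0 then (C₀ * (2 / (δ - 1)) + (2 * C₀ + C1) / (2 - δ)) * (j:ℝ) ^ (1 - δ) else 0) := by
    intro k hk
    rw [Finset.mem_range] at hk
    have hEq : (∫ t in ((k:ℝ) * h)..((k + 1 : ℕ) * h), (x - t) ^ (1 - δ) * q t) -
        h ^ (2 - δ) / (2 - δ) * (dCoef δ (j - k) * Q k) =
        ∫ t in ((k:ℝ) * h)..((k + 1 : ℕ) * h), ((x - t) ^ (1 - δ) * q t - (x - t) ^ (1 - δ) * Q k) := by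
      rw [intervalIntegral.integral_sub (hintk k hk) ((ii_ker δ hδ2 x _ _).mul_const _),
        intervalIntegral.integral_mul_const, hI k hk]
      ring
    rw [hEq]
    have hhh : h ^ (δ - 2) * h ^ (2 - δ) = 1 := by
      rw [← Real.rpow_add hh]; simp
    rcases Nat.eq_zero_or_pos k with rfl | hkp
    · have hb : |∫ t in (((0:ℕ):ℝ) * h)..((0 + 1 : ℕ) * h), ((x - t) ^ (1 - δ) * q t - (x - t) ^ (1 - δ) * Q 0)| ≤
          ∫ t in (((0:ℕ):ℝ) * h)..((0 + 1 : ℕ) * h), (dom t + C1 * h ^ (δ - 2) * (x - t) ^ (1 - δ)) := by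
        have hgi : IntervalIntegrable (fun t => dom t + C1 * h ^ (δ - 2) * (x - t) ^ (1 - δ))
            MeasureTheory.volume (((0:ℕ):ℝ) * h) ((0 + 1 : ℕ) * h) :=
          (hdomi _ _).add ((ii_ker δ hδ2 x _ _).const_mul _)
        rw [← Real.norm_eq_abs]
        refine intervalIntegral.norm_integral_le_of_norm_le (hle 0) ?_ hgi
        have hne : ∀ᵐ t : ℝ ∂MeasureTheory.volume, t ≠ (0 + 1 : ℕ) * h := by
          simp [MeasureTheory.ae_iff]
        filter_upwards [hne] with t htne ht
        have ht' : t ∈ Set.Ioo 0 x := hsub 0 hk ⟨ht.1, lt_of_le_of_ne ht.2 htne⟩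
        have hB' : 0 ≤ (x - t) ^ (1 - δ) := by
          have : 0 < x - t := by linarith [ht'.2]
          positivity
        rw [Real.norm_eq_abs]
        refine (abs_sub _ _).trans ?_
        refine add_le_add (hptq t ht') ?_
        rw [abs_mul, abs_of_nonneg hB', mul_comm]
        exact mul_le_mul_of_nonneg_right hQ0 hB'
      refine hb.trans ?_
      have i1 : ∫ t in (((0:ℕ):ℝ) * h)..((0 + 1 : ℕ) * h), dom t =
          C₀ * ((x / 2) ^ (1 - δ) * (((((0 + 1 : ℕ):ℝ) * h) ^ (δ - 2 + 1) - (((0:ℕ):ℝ) * h) ^ (δ - 2 + 1)) / (δ - 2 + 1))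
            + (h / 2) ^ (δ - 2) * (h ^ (2 - δ) / (2 - δ) * dCoef δ (j - 0))) := by
        simp only [hdom]
        rw [intervalIntegral.integral_const_mul,
          intervalIntegral.integral_add ((intervalIntegral.intervalIntegrable_rpow' (by linarith)).const_mul _)
            ((ii_ker δ hδ2 x _ _).const_mul _),
          intervalIntegral.integral_const_mul, intervalIntegral.integral_const_mul, hI 0 hk,
          integral_rpow (by left; linarith)]
      rw [intervalIntegral.integral_add (hdomi _ _) ((ii_ker δ hδ2 x _ _).const_mul _),
        i1, intervalIntegral.integral_const_mul, hI 0 hk]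
      have e0 : δ - 2 + 1 = δ - 1 := by ring
      have e00 : ((0:ℕ):ℝ) ^ (δ - 3) = 0 := by
        rw [Nat.cast_zero, Real.zero_rpow (by linarith)]
      rw [e0, e00]
      simp only [Nat.cast_zero, zero_mul, zero_add, Nat.cast_one, one_mul, mul_zero, if_true, Nat.sub_zero]
      rw [Real.zero_rpow (by linarith), sub_zero]
      have hd := dC_upper δ hδ1 hδ2 j hj
      have hdp := dC_pos δ hδ1 hδ2 j hj
      have hh1 : (x / 2) ^ (1 - δ) * (h ^ (δ - 1) / (δ - 1)) ≤ 2 / (δ - 1) * (j:ℝ) ^ (1 - δ) := by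
        have a1 := half_pow1 δ hδ1 hδ2 x hx0
        have a2 : x ^ (1 - δ) * h ^ (δ - 1) = (j:ℝ) ^ (1 - δ) := by
          rw [hx, Real.mul_rpow hj0.le hh.le, mul_assoc, ← Real.rpow_add hh]
          simp
        calc _ ≤ 2 * x ^ (1 - δ) * (h ^ (δ - 1) / (δ - 1)) := mul_le_mul_of_nonneg_right a1 (by positivity)
          _ = 2 / (δ - 1) * (x ^ (1 - δ) * h ^ (δ - 1)) := by ring
          _ = _ := by rw [a2]
      have hh2 : (h / 2) ^ (δ - 2) * (h ^ (2 - δ) / (2 - δ) * dCoef δ j) ≤ 2 / (2 - δ) * (j:ℝ) ^ (1 - δ) := by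
        have a1 := half_pow2 δ hδ1 hδ2 h hh
        calc _ ≤ 2 * h ^ (δ - 2) * (h ^ (2 - δ) / (2 - δ) * dCoef δ j) := mul_le_mul_of_nonneg_right a1 (by positivity)
          _ = 2 / (2 - δ) * dCoef δ j * (h ^ (δ - 2) * h ^ (2 - δ)) := by ring
          _ = 2 / (2 - δ) * dCoef δ j := by rw [hhh, mul_one]
          _ ≤ _ := mul_le_mul_of_nonneg_left hd (by positivity)
      have hh3 : C1 * h ^ (δ - 2) * (h ^ (2 - δ) / (2 - δ) * dCoef δ j) ≤ C1 / (2 - δ) * (j:ℝ) ^ (1 - δ) := by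
        calc _ = C1 / (2 - δ) * dCoef δ j * (h ^ (δ - 2) * h ^ (2 - δ)) := by ring
          _ = C1 / (2 - δ) * dCoef δ j := by rw [hhh, mul_one]
          _ ≤ _ := mul_le_mul_of_nonneg_left hd (by positivity)
      calc _ ≤ C₀ * (2 / (δ - 1) * (j:ℝ) ^ (1 - δ) + 2 / (2 - δ) * (j:ℝ) ^ (1 - δ)) + C1 / (2 - δ) * (j:ℝ) ^ (1 - δ) := by
            apply add_le_add _ hh3
            apply mul_le_mul_of_nonneg_left _ hC0
            exact add_le_add hh1 hh2
        _ = _ := by ring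
    · rw [if_neg (by omega), add_zero]
      have hb : |∫ t in ((k:ℝ) * h)..((k + 1 : ℕ) * h), ((x - t) ^ (1 - δ) * q t - (x - t) ^ (1 - δ) * Q k)| ≤
          ∫ t in ((k:ℝ) * h)..((k + 1 : ℕ) * h), C2 * (h ^ (δ - 2) * (k:ℝ) ^ (δ - 3)) * (x - t) ^ (1 - δ) := by
        rw [← Real.norm_eq_abs]
        refine intervalIntegral.norm_integral_le_of_norm_le (hle k) ?_ ((ii_ker δ hδ2 x _ _).const_mul _)
        have hne : ∀ᵐ t : ℝ ∂MeasureTheory.volume, t ≠ (k + 1 : ℕ) * h := by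
          simp [MeasureTheory.ae_iff]
        filter_upwards [hne] with t htne ht
        have ht2 : t ∈ Set.Ioo ((k:ℝ) * h) ((k + 1 : ℕ) * h) := ⟨ht.1, lt_of_le_of_ne ht.2 htne⟩
        have ht' : t ∈ Set.Ioo 0 x := hsub k hk ht2
        have hB' : 0 ≤ (x - t) ^ (1 - δ) := by
          have : 0 < x - t := by linarith [ht'.2]
          positivity
        rw [Real.norm_eq_abs, ← mul_sub, abs_mul, abs_of_nonneg hB', mul_comm]
        exact mul_le_mul_of_nonneg_right (hQ k hkp hk t ht2) hB'
      refine hb.trans (le_of_eq ?_)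
      rw [intervalIntegral.integral_const_mul, hI k hk]
      calc _ = C2 / (2 - δ) * ((k:ℝ) ^ (δ - 3) * dCoef δ (j - k)) * (h ^ (δ - 2) * h ^ (2 - δ)) := by ring
        _ = _ := by rw [hhh, mul_one]
  refine (Finset.sum_le_sum hterm).trans ?_
  rw [Finset.sum_add_distrib, ← Finset.mul_sum, Finset.sum_ite_eq' , if_pos (by simp; omega)]
  have := mul_le_mul_of_nonneg_left (hZ j hj) (by positivity : 0 ≤ C2 / (2 - δ))
  linarith

lemma Icc_ev (x : ℝ) (hx : x ∈ Set.Ioc (0:ℝ) 1) :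
    (Set.Icc (0:ℝ) 1 : Set ℝ) =ᶠ[nhds x] (Set.Ioc (0:ℝ) 1 : Set ℝ) := by
  filter_upwards [lt_mem_nhds hx.1] with y hy
  apply propext
  exact ⟨fun h => ⟨hy, h.2⟩, fun h => ⟨hy.le, h.2⟩⟩

lemma du_contDiffOn (g : ℝ → ℝ) (m n : ℕ∞) (hmn : (m:WithTop ℕ∞) + 1 ≤ n) (hg : ContDiffOn ℝ n g (Set.Ioc 0 1)) :
    ContDiffOn ℝ m (du g) (Set.Ioc 0 1) := by
  have := hg.derivWithin (uniqueDiffOn_Ioc 0 1) hmn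
  apply this.congr
  intro x hx
  exact derivWithin_congr_set (Icc_ev x hx)

lemma du_hasDerivAt (g : ℝ → ℝ) (hg : ContDiffOn ℝ 1 g (Set.Ioc 0 1)) (x : ℝ)
    (hx : x ∈ Set.Ioo (0:ℝ) 1) : HasDerivAt g (du g x) x := by
  have h1 : DifferentiableAt ℝ g x :=
    (hg.differentiableOn (by norm_num) x ⟨hx.1, hx.2.le⟩).differentiableAt (Ioc_mem_nhds hx.1 hx.2)
  have h2 : du g x = deriv g x := derivWithin_of_mem_nhds (Icc_mem_nhds hx.1 hx.2)
  rw [h2]; exact h1.hasDerivAt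

lemma hold (δ : ℝ) (hδ1 : 1 < δ) (hδ2 : δ < 2) (C₀ : ℝ) (hC0 : 0 ≤ C₀) (p q : ℝ → ℝ)
    (hp : ContinuousOn p (Set.Icc 0 1)) (hpq : ∀ x ∈ Set.Ioo (0:ℝ) 1, HasDerivAt p (q x) x)
    (hq : ∀ x ∈ Set.Ioc (0:ℝ) 1, |q x| ≤ C₀ * x ^ (δ - 2)) (x y : ℝ) (hx : x ∈ Set.Icc (0:ℝ) 1)
    (hy : y ∈ Set.Icc (0:ℝ) 1) : |p y - p x| ≤ C₀ / (δ - 1) * |y - x| ^ (δ - 1) := by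
  have hd : 0 < δ - 1 := by linarith
  wlog hxy : x ≤ y generalizing x y
  · rw [abs_sub_comm, abs_sub_comm y x]
    exact this y x hy hx (by linarith)
  rw [abs_of_nonneg (by linarith : 0 ≤ y - x)]
  have hm : ∀ s : ℝ, |s| = 1 → MonotoneOn (fun t => C₀ / (δ - 1) * t ^ (δ - 1) + s * p t) (Set.Icc 0 1) := by
    intro s hs
    apply monotoneOn_of_hasDerivWithinAt_nonneg (convex_Icc _ _)
      (f' := fun t => C₀ / (δ - 1) * ((δ - 1) * t ^ (δ - 1 - 1)) + s * q t)
    · apply ContinuousOn.add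
      · apply ContinuousOn.mul (by fun_prop)
        apply ContinuousOn.rpow_const (by fun_prop)
        intros; right; linarith
      · exact continuousOn_const.mul hp
    · intro t ht
      rw [interior_Icc] at ht
      apply HasDerivAt.hasDerivWithinAt
      exact ((Real.hasDerivAt_rpow_const (by left; linarith [ht.1])).const_mul _).add ((hpq t ht).const_mul s)
    · intro t ht
      rw [interior_Icc] at ht
      have h1 := hq t ⟨ht.1, ht.2.le⟩
      have h2 : |s * q t| ≤ C₀ * t ^ (δ - 2) := by rw [abs_mul, hs, one_mul]; exact h1
      have e : δ - 1 - 1 = δ - 2 := by ring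
      have e2 : C₀ / (δ - 1) * ((δ - 1) * t ^ (δ - 1 - 1)) = C₀ * t ^ (δ - 2) := by
        rw [e]; field_simp
      rw [e2]
      linarith [(abs_le.1 h2).1]
  have m1 := hm 1 (by simp) hx hy hxy
  have m2 := hm (-1) (by simp) hx hy hxy
  have hr : y ^ (δ - 1) ≤ x ^ (δ - 1) + (y - x) ^ (δ - 1) := by
    have := Real.rpow_add_le_add_rpow hx.1 (by linarith : 0 ≤ y - x) hd.le (by linarith : δ - 1 ≤ 1)
    simpa using this
  have hr2 := mul_le_mul_of_nonneg_left hr (by positivity : 0 ≤ C₀ / (δ - 1))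
  simp only at m1 m2
  rw [abs_le]; constructor <;> nlinarith

lemma mvt1 (u p : ℝ → ℝ) (hu : ContinuousOn u (Set.Icc 0 1))
    (hup : ∀ x ∈ Set.Ioo (0:ℝ) 1, HasDerivAt u (p x) x) (x y : ℝ) (hx : 0 ≤ x) (hxy : x < y)
    (hy : y ≤ 1) : ∃ ξ ∈ Set.Ioo x y, u y - u x = (y - x) * p ξ := by
  obtain ⟨ξ, hξ, h⟩ := exists_hasDerivAt_eq_slope u p hxy
    (hu.mono (Set.Icc_subset_Icc hx hy)) (fun z hz => hup z ⟨by linarith [hz.1], by linarith [hz.2]⟩)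
  refine ⟨ξ, hξ, ?_⟩
  rw [h]
  have : y - x ≠ 0 := by linarith
  field_simp

lemma mvt2 (u p q : ℝ → ℝ) (hu : ContinuousOn u (Set.Icc 0 1)) (hp : ContinuousOn p (Set.Icc 0 1))
    (hup : ∀ x ∈ Set.Ioo (0:ℝ) 1, HasDerivAt u (p x) x)
    (hpq : ∀ x ∈ Set.Ioo (0:ℝ) 1, HasDerivAt p (q x) x) (a h : ℝ) (ha : 0 ≤ a) (hh : 0 < h)
    (hah : a + 2 * h ≤ 1) :
    ∃ ξ ∈ Set.Ioo a (a + 2 * h), u (a + 2 * h) - 2 * u (a + h) + u a = h ^ 2 * q ξ := by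
  obtain ⟨η, hη, h1⟩ := exists_hasDerivAt_eq_slope (fun s => u (s + h) - u s) (fun s => p (s + h) - p s)
    (by linarith : a < a + h)
    (by
      apply ContinuousOn.sub
      · apply hu.comp (by fun_prop)
        intro s hs
        exact ⟨by linarith [hs.1], by linarith [hs.2]⟩
      · exact hu.mono (Set.Icc_subset_Icc ha (by linarith)))
    (fun z hz => by
      apply HasDerivAt.sub
      · exact (hup (z + h) ⟨by linarith [hz.1], by linarith [hz.2]⟩).comp_add_const z h
      · exact hup z ⟨by linarith [hz.1], by linarith [hz.2]⟩)
  obtain ⟨ξ, hξ, h2⟩ := mvt1 p q hp hpq η (η + h) (by linarith [hη.1]) (by linarith) (by linarith [hη.2])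
  refine ⟨ξ, ⟨by linarith [hξ.1, hη.1], by linarith [hξ.2, hη.2]⟩, ?_⟩
  have e : a + h + h = a + 2 * h := by ring
  simp only [e] at h1
  rw [h2, eq_div_iff (by linarith)] at h1
  linarith

lemma lip_s18 (δ : ℝ) (hδ2 : δ < 2) (C₀ : ℝ) (hC0 : 0 ≤ C₀) (q r : ℝ → ℝ)
    (hqr : ∀ x ∈ Set.Ioo (0:ℝ) 1, HasDerivAt q (r x) x)
    (hr : ∀ x ∈ Set.Ioc (0:ℝ) 1, |r x| ≤ C₀ * x ^ (δ - 3)) (a x y : ℝ) (ha : 0 < a)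
    (hx : x ∈ Set.Ico a 1) (hy : y ∈ Set.Ico a 1) :
    |q x - q y| ≤ C₀ * a ^ (δ - 3) * |x - y| := by
  refine Convex.norm_image_sub_le_of_norm_hasDerivWithin_le (f := q) (f' := r) (s := Set.Ico a 1)
    (fun z hz => (hqr z ⟨by linarith [hz.1], hz.2⟩).hasDerivWithinAt) ?_ (convex_Ico a 1) hy hx
  intro z hz
  refine (hr z ⟨by linarith [hz.1], hz.2.le⟩).trans ?_
  apply mul_le_mul_of_nonneg_left _ hC0
  exact Real.rpow_le_rpow_of_nonpos ha hz.1 (by linarith)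

set_option maxHeartbeats 1600000 in
theorem stmt18 (δ : ℝ) (hδ1 : 1 < δ) (hδ2 : δ < 2)
    (α₀ α₁ γ₀ γ₁ : ℝ) (hα₀ : 1 / (δ - 1) ≤ α₀) (hα₁ : 0 ≤ α₁)
    (b c f : ℝ → ℝ) (hb : ContinuousOn b (Set.Icc 0 1))
    (hcont : ContinuousOn c (Set.Icc 0 1)) (hf : ContinuousOn f (Set.Icc 0 1))
    (hc0 : ∀ x ∈ Set.Icc (0:ℝ) 1, 0 ≤ c x)
    (u : ℝ → ℝ) (hu1 : ContDiffOn ℝ 1 u (Set.Icc 0 1)) (hu3 : ContDiffOn ℝ 3 u (Set.Ioc 0 1))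
    (C₀ : ℝ)
    (hu2b : ∀ x ∈ Set.Ioc (0:ℝ) 1, |du (du u) x| ≤ C₀ * x ^ (δ - 2))
    (hu3b : ∀ x ∈ Set.Ioc (0:ℝ) 1, |du (du (du u)) x| ≤ C₀ * x ^ (δ - 3))
    (hode : ∀ x ∈ Set.Ioo (0:ℝ) 1, -caputoW δ u x + b x * du u x + c x * u x = f x)
    (hbc0 : u 0 - α₀ * du u 0 = γ₀)
    (hbc1 : u 1 + α₁ * du u 1 = γ₁) :
    ∃ C : ℝ, ∀ N : ℕ, 3 ≤ N → ∀ U : ℕ → ℝ,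
      ((1 + α₀ / ((1:ℝ) / N)) * U 0 - (α₀ / ((1:ℝ) / N)) * U 1 = γ₀) →
      (∀ j : ℕ, 1 ≤ j → j ≤ N - 1 →
        -(1 / (((1:ℝ) / N) ^ δ * Real.Gamma (3 - δ))) *
            (∑ k ∈ Finset.range j, dCoef δ (j - k) *
              (U (k + 2) - 2 * U (k + 1) + U k))
          + b ((j:ℝ) / N) *
              (if b ((j:ℝ) / N) < 0 then (U (j + 1) - U j) / ((1:ℝ) / N)
                else (U j - U (j - 1)) / ((1:ℝ) / N))
          + c ((j:ℝ) / N) * U j = f ((j:ℝ) / N)) →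
      (-(α₁ / ((1:ℝ) / N)) * U (N - 1) + (1 + α₁ / ((1:ℝ) / N)) * U N = γ₁) →
      ∀ j : ℕ, j ≤ N → |u ((j:ℝ) / N) - U j| ≤ C * ((1:ℝ) / N) ^ (δ - 1) := by
  set p := du u with hp
  set q := du p with hq
  set r := du q with hr
  have cu2 : ContDiffOn ℝ 2 p (Set.Ioc 0 1) := du_contDiffOn u 2 3 (by norm_num) hu3
  have cu1 : ContDiffOn ℝ 1 q (Set.Ioc 0 1) := du_contDiffOn p 1 2 (by norm_num) cu2
  have dup : ∀ x ∈ Set.Ioo (0:ℝ) 1, HasDerivAt u (p x) x :=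
    du_hasDerivAt u (hu3.of_le (by norm_num))
  have dpq : ∀ x ∈ Set.Ioo (0:ℝ) 1, HasDerivAt p (q x) x :=
    du_hasDerivAt p (cu2.of_le (by norm_num))
  have dqr : ∀ x ∈ Set.Ioo (0:ℝ) 1, HasDerivAt q (r x) x := du_hasDerivAt q cu1
  have cu : ContinuousOn u (Set.Icc 0 1) := hu1.continuousOn
  have cp : ContinuousOn p (Set.Icc 0 1) :=
    hu1.continuousOn_derivWithin (uniqueDiffOn_Icc one_pos) le_rfl
  have cq : ContinuousOn q (Set.Ioc 0 1) := cu1.continuousOn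
  have hC0 : 0 ≤ C₀ := by
    have := hu2b 1 (by simp)
    simp only [Real.one_rpow, mul_one] at this
    exact (abs_nonneg _).trans this
  obtain ⟨B, hB⟩ := isCompact_Icc.exists_bound_of_continuousOn hb
  have hB0 : 0 ≤ B := (norm_nonneg _).trans (hB 0 (by simp))
  have hδ2' : 0 < 2 - δ := by linarith
  have hδ1' : 0 < δ - 1 := by linarith
  have hα0 : 0 < α₀ := lt_of_lt_of_le (by positivity) hα₀
  set K := C₀ / (δ - 1) with hK
  have hK0 : 0 ≤ K := by positivity
  have hH : ∀ x ∈ Set.Icc (0:ℝ) 1, ∀ y ∈ Set.Icc (0:ℝ) 1, |p y - p x| ≤ K * |y - x| ^ (δ - 1) :=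
    fun x hx y hy => hold δ hδ1 hδ2 C₀ hC0 p q cp dpq hu2b x y hx hy
  have hH' : ∀ x ∈ Set.Icc (0:ℝ) 1, ∀ y ∈ Set.Icc (0:ℝ) 1, ∀ s : ℝ, |y - x| ≤ s →
      |p y - p x| ≤ K * s ^ (δ - 1) := fun x hx y hy s hs => (hH x hx y hy).trans
    (mul_le_mul_of_nonneg_left (Real.rpow_le_rpow (abs_nonneg _) hs hδ1'.le) hK0)
  obtain ⟨T0, hT0, hT⟩ := trunc_s18 δ hδ1 hδ2 C₀ (2 * K) (2 * C₀) hC0 (by positivity) (by positivity)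
  have hG2 : 0 < Real.Gamma (2 - δ) := Real.Gamma_pos_of_pos hδ2'
  have hG3 : Real.Gamma (3 - δ) = (2 - δ) * Real.Gamma (2 - δ) := by
    rw [← Real.Gamma_add_one hδ2'.ne']; congr 1; ring
  obtain ⟨C, hC⟩ := stab δ hδ1 hδ2 α₀ α₁ (T0 / Real.Gamma (2 - δ) + B * K + α₀ * K + α₁ * K) hα₀ hα₁
    (by positivity)
  refine ⟨C, ?_⟩
  intro N hN U hU0 hUj hUN
  have hNp : (0:ℝ) < N := by exact_mod_cast (by omega : 0 < N)
  have hN3 : (3:ℝ) ≤ N := by exact_mod_cast hN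
  have hdiv : ∀ k : ℕ, (k:ℝ) / N = k * ((1:ℝ) / N) := fun k => by ring
  have hNh : (N:ℝ) * ((1:ℝ) / N) = 1 := by field_simp
  set h : ℝ := (1:ℝ) / N with hh
  have hhp : 0 < h := by positivity
  have hkN : ∀ k : ℕ, k ≤ N → (k:ℝ) * h ≤ 1 := by
    intro k hk
    rw [← hNh]
    exact mul_le_mul_of_nonneg_right (by exact_mod_cast hk) hhp.le
  have hkN' : ∀ k : ℕ, k < N → (k:ℝ) * h < 1 := by
    intro k hk
    rw [← hNh]
    exact mul_lt_mul_of_pos_right (by exact_mod_cast hk) hhp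
  have hh1 : h ≤ 1 := by simpa using hkN 1 (by omega)
  have hHn : 0 ≤ h ^ (δ - 1) := by positivity
  have hTG : 0 ≤ T0 / Real.Gamma (2 - δ) := by positivity
  have hres := hC N hN (fun j => b ((j:ℝ) / N)) (fun j => c ((j:ℝ) / N))
    (fun j => u ((j:ℝ) / N) + (-1) * U j) ?_ ?_ ?_ ?_
  · intro j hj
    have := hres j hj
    rw [show u ((j:ℝ) / N) - U j = u ((j:ℝ) / N) + (-1) * U j by ring]
    exact this
  · intro j hj
    apply hc0
    rw [hdiv]
    exact ⟨by positivity, hkN j hj⟩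
  · obtain ⟨ξ, hξ, he⟩ := mvt1 u p cu dup 0 h le_rfl hhp hh1
    have hb1 := hH' ξ ⟨hξ.1.le, by linarith [hξ.2]⟩ 0 (by simp) h
      (by rw [abs_le]; constructor <;> linarith [hξ.1, hξ.2])
    have e1 : (1 + α₀ / h) * (u (((0:ℕ):ℝ) / N) + -1 * U 0) - α₀ / h * (u (((1:ℕ):ℝ) / N) + -1 * U 1) =
        α₀ * (p 0 - p ξ) := by
      have e2 : u h - u 0 = h * p ξ := by rw [he]; ring
      have e3 : ((0:ℕ):ℝ) / N = 0 := by simp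
      have e4 : ((1:ℕ):ℝ) / N = h := by simp [hh]
      rw [e3, e4]
      have e5 : α₀ / h * (u h - u 0) = α₀ * p ξ := by rw [e2]; field_simp
      linarith
    beta_reduce
    rw [e1, abs_mul, abs_of_pos hα0]
    have := mul_le_mul_of_nonneg_left hb1 hα0.le
    have h2 : 0 ≤ (T0 / Real.Gamma (2 - δ) + B * K + α₁ * K) * h ^ (δ - 1) := by positivity
    linarith
  · intro j hj1 hj2
    have hj0 : (0:ℝ) < j := by exact_mod_cast hj1
    have hjx : (j:ℝ) / N ∈ Set.Ioo (0:ℝ) 1 := by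
      rw [hdiv]; exact ⟨by positivity, hkN' j (by omega)⟩
    have hode' := hode _ hjx
    have hrowU : rowOp δ (1 / (h ^ δ * Real.Gamma (3 - δ))) N (fun j => b ((j:ℝ) / N))
        (fun j => c ((j:ℝ) / N)) U j = f ((j:ℝ) / N) := hUj j hj1 hj2
    rw [rowOp_lin, hrowU]
    set Q : ℕ → ℝ := fun k => (u (((k+2 : ℕ):ℝ) / N) - 2 * u (((k+1 : ℕ):ℝ) / N) + u ((k:ℝ) / N)) / h ^ 2 with hQ
    have hQ0 : |Q 0| ≤ 2 * K * h ^ (δ - 2) := by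
      obtain ⟨ξ0, hξ0, he0⟩ := mvt1 u p cu dup 0 h le_rfl hhp hh1
      have h2h : 2 * h ≤ 1 := by simpa using hkN 2 (by omega)
      obtain ⟨ξ1, hξ1, he1⟩ := mvt1 u p cu dup h (2 * h) hhp.le (by linarith) h2h
      have hb1 := hH' ξ0 ⟨hξ0.1.le, by linarith [hξ0.2]⟩ ξ1 ⟨by linarith [hξ1.1], by linarith [hξ1.2]⟩ (2 * h)
        (by rw [abs_le]; constructor <;> linarith [hξ0.1, hξ0.2, hξ1.1, hξ1.2])
      have e1 : Q 0 = (p ξ1 - p ξ0) / h := by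
        simp only [hQ]
        rw [hdiv, hdiv, hdiv]
        have a1 : ((0 + 2 : ℕ):ℝ) * h = 2 * h := by norm_num
        have a2 : ((0 + 1 : ℕ):ℝ) * h = h := by norm_num
        have a3 : ((0 : ℕ):ℝ) * h = 0 := by norm_num
        rw [a1, a2, a3]
        have : u (2 * h) - 2 * u h + u 0 = h * (p ξ1 - p ξ0) := by linarith
        rw [this]; field_simp
      rw [e1, abs_div, abs_of_pos hhp, div_le_iff₀ hhp]
      refine hb1.trans ?_
      have a4 : h ^ (δ - 2) * h = h ^ (δ - 1) := by
        rw [← Real.rpow_add_one hhp.ne']; congr 1; ring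
      have a5 : (2:ℝ) ^ (δ - 1) ≤ 2 := by
        calc (2:ℝ) ^ (δ - 1) ≤ 2 ^ (1:ℝ) := Real.rpow_le_rpow_of_exponent_le (by norm_num) (by linarith)
          _ = 2 := by norm_num
      rw [mul_assoc, a4, Real.mul_rpow (by norm_num) hhp.le]
      calc K * (2 ^ (δ - 1) * h ^ (δ - 1)) ≤ K * (2 * h ^ (δ - 1)) := by gcongr
        _ = _ := by ring
    have hQk : ∀ k : ℕ, 1 ≤ k → k < j → ∀ t ∈ Set.Ioo (k * h) ((k + 1 : ℕ) * h),
        |q t - Q k| ≤ 2 * C₀ * (h ^ (δ - 2) * (k:ℝ) ^ (δ - 3)) := by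
      intro k hk1 hkj t ht
      have hk0 : (0:ℝ) < k := by exact_mod_cast hk1
      have hk2 := hkN (k+2) (by omega)
      have hk1' := hkN (k+1) (by omega)
      push_cast at hk2 hk1' ht
      have ht2 := ht.2
      have ht1 := ht.1
      obtain ⟨ξ, hξ, he⟩ := mvt2 u p q cu cp dup dpq (k * h) h (by positivity) hhp (by linarith)
      have e1 : Q k = q ξ := by
        simp only [hQ]
        rw [hdiv, hdiv, hdiv]
        have a1 : ((k + 2 : ℕ):ℝ) * h = k * h + 2 * h := by push_cast; ring
        have a2 : ((k + 1 : ℕ):ℝ) * h = k * h + h := by push_cast; ring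
        rw [a1, a2, he]; field_simp
      rw [e1]
      have hl := lip_s18 δ hδ2 C₀ hC0 q r dqr hu3b (k * h) t ξ (by positivity)
        ⟨ht1.le, by linarith⟩ ⟨hξ.1.le, by linarith [hξ.2]⟩
      have hd : |t - ξ| ≤ 2 * h := by
        rw [abs_le]; constructor <;> linarith [hξ.1, hξ.2]
      have a4 : h ^ (δ - 3) * h = h ^ (δ - 2) := by
        rw [← Real.rpow_add_one hhp.ne']; congr 1; ring
      calc |q t - q ξ| ≤ C₀ * (k * h) ^ (δ - 3) * (2 * h) := hl.trans (by gcongr)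
        _ = 2 * C₀ * ((h ^ (δ - 3) * h) * (k:ℝ) ^ (δ - 3)) := by
          rw [Real.mul_rpow hk0.le hhp.le]; ring
        _ = _ := by rw [a4]
    have htr := hT h j q Q hhp hj1 (hkN j (by omega)) cq hu2b hQ0 hQk
    have hcap : |caputoW δ u ((j:ℝ) / N) - 1 / (h ^ δ * Real.Gamma (3 - δ)) *
        ∑ k ∈ Finset.range j, dCoef δ (j - k) * (u (((k+2 : ℕ):ℝ) / N) - 2 * u (((k+1 : ℕ):ℝ) / N) + u ((k:ℝ) / N))| ≤
        T0 / Real.Gamma (2 - δ) * (j:ℝ) ^ (1 - δ) := by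
      have e1 : caputoW δ u ((j:ℝ) / N) - 1 / (h ^ δ * Real.Gamma (3 - δ)) *
        ∑ k ∈ Finset.range j, dCoef δ (j - k) * (u (((k+2 : ℕ):ℝ) / N) - 2 * u (((k+1 : ℕ):ℝ) / N) + u ((k:ℝ) / N)) =
        (1 / Real.Gamma (2 - δ)) * ((∫ t in (0:ℝ)..(j * h), (j * h - t) ^ (1 - δ) * q t) -
          h ^ (2 - δ) / (2 - δ) * ∑ k ∈ Finset.range j, dCoef δ (j - k) * Q k) := by
        have e2 : ∑ k ∈ Finset.range j, dCoef δ (j - k) * Q k =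
            (∑ k ∈ Finset.range j, dCoef δ (j - k) * (u (((k+2 : ℕ):ℝ) / N) - 2 * u (((k+1 : ℕ):ℝ) / N) + u ((k:ℝ) / N))) / h ^ 2 := by
          rw [Finset.sum_div]
          apply Finset.sum_congr rfl
          intro k _
          simp only [hQ]; ring
        have e3 : h ^ (2 - δ) = h ^ 2 / h ^ δ := by
          rw [Real.rpow_sub hhp]; norm_num
        rw [e2, e3, hG3]
        unfold caputoW
        rw [hdiv j]
        have e4 : h ^ δ ≠ 0 := by positivity
        rw [mul_sub]
        congr 1
        generalize (∑ k ∈ Finset.range j, dCoef δ (j - k) * (u (((k+2 : ℕ):ℝ) / N) - 2 * u (((k+1 : ℕ):ℝ) / N) + u ((k:ℝ) / N))) = SS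
        field_simp
      rw [e1, abs_mul, abs_of_pos (by positivity)]
      calc _ ≤ 1 / Real.Gamma (2 - δ) * (T0 * (j:ℝ) ^ (1 - δ)) := by gcongr
        _ = _ := by ring
    have hD : |(if b ((j:ℝ) / N) < 0 then (u (((j + 1 : ℕ):ℝ) / N) - u ((j:ℝ) / N)) / h
                else (u ((j:ℝ) / N) - u (((j - 1 : ℕ):ℝ) / N)) / h) - p ((j:ℝ) / N)| ≤ K * h ^ (δ - 1) := by
      have hjx' : (j:ℝ) / N ∈ Set.Icc (0:ℝ) 1 := ⟨hjx.1.le, hjx.2.le⟩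
      have hj1N := hkN (j+1) (by omega)
      push_cast at hj1N
      have hj1' : (1:ℝ) ≤ j := by exact_mod_cast hj1
      rw [hdiv j] at hjx'
      split_ifs with hbs
      · obtain ⟨ξ, hξ, he⟩ := mvt1 u p cu dup (j * h) ((j + 1) * h) (by positivity) (by linarith) hj1N
        rw [hdiv j, hdiv (j+1)]
        push_cast
        rw [he]
        have : ((j + 1) * h - j * h) * p ξ / h = p ξ := by field_simp; ring
        rw [this]
        exact hH' _ hjx' ξ ⟨by linarith [hξ.1, hjx'.1], by linarith [hξ.2]⟩ h
          (by rw [abs_le]; constructor <;> linarith [hξ.1, hξ.2])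
      · have hnn : 0 ≤ ((j:ℝ) - 1) * h := mul_nonneg (by linarith) hhp.le
        obtain ⟨ξ, hξ, he⟩ := mvt1 u p cu dup ((j - 1) * h) (j * h) hnn (by linarith) hjx'.2
        rw [hdiv j, hdiv (j-1), Nat.cast_sub hj1]
        push_cast
        rw [he]
        have : (j * h - (j - 1) * h) * p ξ / h = p ξ := by field_simp; ring
        rw [this]
        exact hH' _ hjx' ξ ⟨by linarith [hξ.1], by linarith [hξ.2, hjx'.2]⟩ h
          (by rw [abs_le]; constructor <;> linarith [hξ.1, hξ.2])
    have hhj : h ^ (δ - 1) ≤ (j:ℝ) ^ (1 - δ) := by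
      have a1 : h ≤ (j:ℝ)⁻¹ := by
        rw [← one_div, le_div_iff₀ hj0, mul_comm]; exact hkN j (by omega)
      calc h ^ (δ - 1) ≤ ((j:ℝ)⁻¹) ^ (δ - 1) := Real.rpow_le_rpow hhp.le a1 hδ1'.le
        _ = _ := by rw [Real.inv_rpow hj0.le, ← Real.rpow_neg hj0.le]; congr 1; ring
    have hbb : |b ((j:ℝ) / N)| ≤ B := hB _ ⟨hjx.1.le, hjx.2.le⟩
    unfold rowOp
    beta_reduce
    generalize (if b ((j:ℝ) / N) < 0 then (u (((j + 1 : ℕ):ℝ) / N) - u ((j:ℝ) / N)) / h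
                else (u ((j:ℝ) / N) - u (((j - 1 : ℕ):ℝ) / N)) / h) = D at *
    generalize (∑ k ∈ Finset.range j, dCoef δ (j - k) * (u (((k+2 : ℕ):ℝ) / N) - 2 * u (((k+1 : ℕ):ℝ) / N) + u ((k:ℝ) / N))) = SS at *
    generalize 1 / (h ^ δ * Real.Gamma (3 - δ)) = κ at *
    have e1 : -κ * SS + b ((j:ℝ) / N) * D + c ((j:ℝ) / N) * u ((j:ℝ) / N) + -1 * f ((j:ℝ) / N) =
        (caputoW δ u ((j:ℝ) / N) - κ * SS) + b ((j:ℝ) / N) * (D - p ((j:ℝ) / N)) := by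
      rw [← hode']; ring
    rw [e1]
    refine (abs_add_le _ _).trans ?_
    rw [abs_mul]
    have h5 : |b ((j:ℝ) / N)| * |D - p ((j:ℝ) / N)| ≤ B * (K * (j:ℝ) ^ (1 - δ)) := by
      apply mul_le_mul hbb (hD.trans (mul_le_mul_of_nonneg_left hhj hK0)) (abs_nonneg _) hB0
    have h6 : 0 ≤ (α₀ * K + α₁ * K) * (j:ℝ) ^ (1 - δ) := by positivity
    linarith
  · have hN1 : ((N - 1 : ℕ):ℝ) / N = 1 - h := by
      rw [Nat.cast_sub (by omega), hh]; push_cast; field_simp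
    obtain ⟨ξ, hξ, he⟩ := mvt1 u p cu dup (1 - h) 1 (by linarith) (by linarith) le_rfl
    have hb1 := hH' 1 (by simp) ξ ⟨by linarith [hξ.1], hξ.2.le⟩ h
      (by rw [abs_le]; constructor <;> linarith [hξ.1, hξ.2])
    have e1 : -(α₁ / h) * (u (((N - 1 : ℕ):ℝ) / N) + -1 * U (N - 1)) + (1 + α₁ / h) * (u ((N:ℝ) / N) + -1 * U N) =
        α₁ * (p ξ - p 1) := by
      have e3 : (N:ℝ) / N = 1 := by field_simp
      rw [hN1, e3]
      have e5 : α₁ / h * (u 1 - u (1 - h)) = α₁ * p ξ := by rw [he]; field_simp; ring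
      linarith
    beta_reduce
    rw [e1, abs_mul, abs_of_nonneg hα₁]
    have := mul_le_mul_of_nonneg_left hb1 hα₁
    have h2 : 0 ≤ (T0 / Real.Gamma (2 - δ) + B * K + α₀ * K) * h ^ (δ - 1) := by positivity
    linarith
end
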